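/- arXiv:2009.09605 — 5 statements merged into one kernel-verified Lean document; each statement's English description precedes it below -/
import Mathlib

section
/- For every d-uniform hypergraph G = (V, E) with d ≥ 2 and all integers β, β⁻ with β ≥ β⁻ ≥ 0 and β − β⁻ ≥ d − 1, there exists a subgraph H ⊆ E that is an HEDCS(G, β, β⁻). -/
open Finset

/-- The degree of a vertex `v` in a hypergraph (set of hyperedges) `H`:
the number of hyperedges of `H` containing `v`. -/
def deg {V : Type*} [DecidableEq V] (H : Finset (Finset V)) (v : V) : ℕ :=
  (H.filter (fun e => v ∈ e)).card

/-!
Take `H ⊆ E` maximizing `∑ e ∈ H, (β e + β⁻ e - degSum H e)`. By double counting, `degSum H e` is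
`∑ f ∈ H, #(e ∩ f)`, so the subtracted part is a quadratic form in `H`, and adding or removing the
edge `e` changes the objective by `±(β e + β⁻ e - 2 * degSum H e) - #e`. If `e` violated its degree
constraint this change would be at least `β e - β⁻ e + 2 - #e`, hence positive by the gap condition
`#e - 1 ≤ β e - β⁻ e`, contradicting maximality.
-/

section

variable {V : Type*} [DecidableEq V]

/-- The degree sum `∑ v ∈ e, d_H(v)` of a vertex set `e` in the hypergraph `H`, the quantity bounded
in the definition of an HEDCS. It is integer-valued so that it can be compared with the thresholds
and subtracted. -/
def degSum (H : Finset (Finset V)) (e : Finset V) : ℤ :=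
  ∑ v ∈ e, (deg H v : ℤ)

theorem degSum_eq_sum_card_inter (H : Finset (Finset V)) (e : Finset V) :
    degSum H e = ∑ f ∈ H, (#(e ∩ f) : ℤ) := by
  simp only [degSum, deg, ← filter_mem_eq_inter]
  exact_mod_cast sum_card_bipartiteAbove_eq_sum_card_bipartiteBelow (fun v f => v ∈ f)

theorem degSum_insert {H : Finset (Finset V)} {f : Finset V} (hf : f ∉ H) (e : Finset V) :
    degSum (insert f H) e = degSum H e + #(e ∩ f) := by
  rw [degSum_eq_sum_card_inter, degSum_eq_sum_card_inter, sum_insert hf, add_comm]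

/-- The objective whose maximizers are HEDCSs: the total weight of the edges of `H` minus the
energy `∑ e ∈ H, degSum H e`. The energy equals `∑ v, d_H(v) ^ 2`; summing over edges instead avoids
fixing a finite vertex set. -/
def potential (w : Finset V → ℤ) (H : Finset (Finset V)) : ℤ :=
  ∑ e ∈ H, (w e - degSum H e)

theorem potential_insert (w : Finset V → ℤ) {H : Finset (Finset V)} {e : Finset V} (he : e ∉ H) :
    potential w (insert e H) = potential w H + w e - 2 * degSum H e - #e := by
  have degSum_cross : ∑ f ∈ H, (#(f ∩ e) : ℤ) = degSum H e := by
    simp only [degSum_eq_sum_card_inter, inter_comm]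
  simp only [potential, sum_insert he, degSum_insert he, inter_self, sum_sub_distrib,
    sum_add_distrib, degSum_cross]
  ring

theorem potential_erase (w : Finset V → ℤ) {H : Finset (Finset V)} {e : Finset V} (he : e ∈ H) :
    potential w (H.erase e) = potential w H - w e + 2 * degSum H e - #e := by
  have potential_eq := potential_insert w (notMem_erase e H)
  have degSum_eq := degSum_insert (notMem_erase e H) e
  rw [insert_erase he] at potential_eq degSum_eq
  rw [inter_self] at degSum_eq
  linarith

theorem hedcs_exists_general (E : Finset (Finset V)) (β βm : Finset V → ℤ)
    (hgap : ∀ e ∈ E, (#e : ℤ) - 1 ≤ β e - βm e) :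
    ∃ H ⊆ E, (∀ e ∈ H, degSum H e ≤ β e) ∧ (∀ e ∈ E, e ∉ H → βm e ≤ degSum H e) := by
  obtain ⟨H, hH, hmax⟩ := exists_max_image E.powerset (potential (β + βm)) (powerset_nonempty E)
  simp only [mem_powerset] at hH hmax
  refine ⟨H, hH, fun e he => ?_, fun e heE he => ?_⟩
  · have erase_le := hmax (H.erase e) ((erase_subset e H).trans hH)
    rw [potential_erase _ he, Pi.add_apply] at erase_le
    have gap := hgap e (hH he)
    omega
  · have insert_le := hmax (insert e H) (insert_subset heE hH)
    rw [potential_insert _ he, Pi.add_apply] at insert_le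
    have gap := hgap e heE
    omega

end

/-- For every `d`-uniform hypergraph `G = (V, E)` with `d ≥ 2` and integers
`β ≥ β⁻ ≥ 0` with `β − β⁻ ≥ d − 1`, there exists a subgraph `H ⊆ E` that is an
`HEDCS(G, β, β⁻)`: every edge in `H` has degree-sum at most `β`, every edge of
`E \ H` has degree-sum at least `β⁻`. -/
theorem hedcs_exists {V : Type*} [DecidableEq V] (d : ℕ) (hd : 2 ≤ d)
    (E : Finset (Finset V)) (hE : ∀ e ∈ E, e.card = d)
    (β βm : ℤ) (hβm : 0 ≤ βm) (hββ : βm ≤ β) (hgap : (d : ℤ) - 1 ≤ β - βm) :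
    ∃ H ⊆ E,
      (∀ e ∈ H, (∑ v ∈ e, (deg H v : ℤ)) ≤ β) ∧
      (∀ e ∈ E, e ∉ H → βm ≤ ∑ v ∈ e, (deg H v : ℤ)) :=
  hedcs_exists_general E (fun _ => β) (fun _ => βm) fun e he => by rwa [hE e he]
end

section
/- Let d ≥ 2 be an integer, β > 0 a real number, and define φ(x) = min{1, (d−1)x / (d(β − x))} for real 0 ≤ x < β. If a_1, …, a_d are real numbers with 0 ≤ a_i < β for each i, and a_1 + ⋯ + a_d ≥ β(1 − λ) for some real λ ≥ 0, then Σ_{i=1}^d φ(a_i) ≥ 1 − 5λ. -/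
open Finset

/-! In the variable `x / β`, the uncapped quotient lies above its tangent line at `1 / d`, which has
value `1 / d` and slope `d / (d - 1)` there. If no `φ (aᵢ)` is capped, summing the tangent bounds
loses at most `λ d / (d - 1) ≤ 2 λ`. If some `φ (aᵢ)` equals `1`, the sum of the others is bounded
below through `(d - 1) / d * (x / β) ≤ φ x`: since `aᵢ < β`, the remaining `aⱼ` sum to at least
`-λ β`. -/

/-- The function `φ` of the paper, for a real parameter `d` and on the whole line. At `d = 0` and
at `x = β` the quotient takes the junk value `0`. -/
noncomputable def cappedRatio (d β x : ℝ) : ℝ :=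
  min 1 ((d - 1) * x / (d * (β - x)))

section Pointwise

variable {d β x : ℝ}

lemma mul_div_le_cappedRatio (hd : 1 ≤ d) (hβ : 0 < β) (hx : x < β) :
    (d - 1) / d * (x / β) ≤ cappedRatio d β x := by
  have hd₀ : 0 < d := by linarith
  have : 0 ≤ d - 1 := by linarith
  have hβx : 0 < β - x := sub_pos.2 hx
  refine le_min ?_ ?_
  · calc (d - 1) / d * (x / β)
      _ ≤ (d - 1) / d * 1 := by gcongr; exact (div_le_one hβ).2 hx.le
      _ ≤ 1 := by rw [mul_one, div_le_one hd₀]; linarith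
  · have gap : (d - 1) * x / (d * (β - x)) - (d - 1) / d * (x / β) =
        (d - 1) * x ^ 2 / (d * β * (β - x)) := by
      field_simp
      ring
    rw [← sub_nonneg, gap]
    positivity

lemma tangent_le_cappedRatio (hd : 1 < d) (hβ : 0 < β) (hx : x < β)
    (hne : cappedRatio d β x ≠ 1) :
    1 / d + d / (d - 1) * (x / β - 1 / d) ≤ cappedRatio d β x := by
  have : 0 < d := by linarith
  have hd₁ : 0 < d - 1 := sub_pos.2 hd
  have hβx : 0 < β - x := sub_pos.2 hx
  have uncapped : cappedRatio d β x = (d - 1) * x / (d * (β - x)) :=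
    (min_choice _ _).resolve_left hne
  have gap : (d - 1) * x / (d * (β - x)) - (1 / d + d / (d - 1) * (x / β - 1 / d)) =
      (d * x - β) ^ 2 / (d * (d - 1) * β * (β - x)) := by
    field_simp
    ring
  rw [uncapped, ← sub_nonneg, gap]
  positivity

end Pointwise

section Sum

variable {ι : Type*} {s : Finset ι} {a : ι → ℝ} {d β : ℝ}

lemma le_sum_cappedRatio_of_eq_one (hd : 1 ≤ d) (hβ : 0 < β) (ha : ∀ i ∈ s, a i < β)
    {i : ι} (hi : i ∈ s) (hone : cappedRatio d β (a i) = 1) :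
    1 + (d - 1) / d * ((∑ j ∈ s, a j) / β - 1) ≤ ∑ j ∈ s, cappedRatio d β (a j) := by
  classical
  have : 0 ≤ (d - 1) / d := div_nonneg (by linarith) (by linarith)
  have hai : a i / β ≤ 1 := (div_le_one hβ).2 (ha i hi).le
  calc 1 + (d - 1) / d * ((∑ j ∈ s, a j) / β - 1)
    _ ≤ 1 + (d - 1) / d * ((∑ j ∈ s, a j) / β - a i / β) := by gcongr
    _ = 1 + ∑ j ∈ s.erase i, (d - 1) / d * (a j / β) := by
      rw [← add_sum_erase s a hi, ← mul_sum, ← sum_div, add_div, add_sub_cancel_left]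
    _ ≤ 1 + ∑ j ∈ s.erase i, cappedRatio d β (a j) := by
      gcongr with j hj
      exact mul_div_le_cappedRatio hd hβ (ha j (mem_of_mem_erase hj))
    _ = ∑ j ∈ s, cappedRatio d β (a j) := by
      rw [← hone, add_sum_erase s (fun j ↦ cappedRatio d β (a j)) hi]

lemma le_sum_cappedRatio_of_forall_ne_one (hd : 1 < d) (hcard : (#s : ℝ) ≤ d) (hβ : 0 < β)
    (ha : ∀ i ∈ s, a i < β) (hne : ∀ i ∈ s, cappedRatio d β (a i) ≠ 1) :
    1 + d / (d - 1) * ((∑ i ∈ s, a i) / β - 1) ≤ ∑ i ∈ s, cappedRatio d β (a i) := by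
  have : 0 < d := by linarith
  have hd₁ : 0 < d - 1 := sub_pos.2 hd
  have gap : #s * (1 / d) + d / (d - 1) * ((∑ i ∈ s, a i) / β - #s * (1 / d)) -
      (1 + d / (d - 1) * ((∑ i ∈ s, a i) / β - 1)) = (d - #s) / (d * (d - 1)) := by
    field_simp
    ring
  calc 1 + d / (d - 1) * ((∑ i ∈ s, a i) / β - 1)
    _ ≤ #s * (1 / d) + d / (d - 1) * ((∑ i ∈ s, a i) / β - #s * (1 / d)) := by
      rw [← sub_nonneg, gap]
      exact div_nonneg (sub_nonneg.2 hcard) (by positivity)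
    _ = ∑ i ∈ s, (1 / d + d / (d - 1) * (a i / β - 1 / d)) := by
      simp only [sum_add_distrib, ← mul_sum, sum_sub_distrib, ← sum_div, sum_const, nsmul_eq_mul,
        mul_div_assoc]
    _ ≤ ∑ i ∈ s, cappedRatio d β (a i) :=
      sum_le_sum fun i hi ↦ tangent_le_cappedRatio hd hβ (ha i hi) (hne i hi)

theorem phi_sum_lower_bound_general (hd : 1 < d) (hcard : (#s : ℝ) ≤ d) (hβ : 0 < β)
    (ha : ∀ i ∈ s, a i < β) {lam : ℝ} (hlam : 0 ≤ lam) (hsum : β * (1 - lam) ≤ ∑ i ∈ s, a i) :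
    1 - d / (d - 1) * lam ≤ ∑ i ∈ s, cappedRatio d β (a i) := by
  have hd₀ : 0 < d := by linarith
  have hd₁ : 0 < d - 1 := sub_pos.2 hd
  have deficit : -lam ≤ (∑ i ∈ s, a i) / β - 1 := by
    linarith [(le_div_iff₀' hβ).2 hsum]
  by_cases hcap : ∃ i ∈ s, cappedRatio d β (a i) = 1
  · obtain ⟨i, hi, hone⟩ := hcap
    have slope_le : (d - 1) / d ≤ d / (d - 1) :=
      ((div_le_one hd₀).2 (by linarith)).trans ((one_le_div hd₁).2 (by linarith))
    calc 1 - d / (d - 1) * lam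
      _ ≤ 1 - (d - 1) / d * lam := by gcongr
      _ = 1 + (d - 1) / d * -lam := by ring
      _ ≤ 1 + (d - 1) / d * ((∑ j ∈ s, a j) / β - 1) := by gcongr
      _ ≤ ∑ j ∈ s, cappedRatio d β (a j) := le_sum_cappedRatio_of_eq_one hd.le hβ ha hi hone
  · push Not at hcap
    calc 1 - d / (d - 1) * lam
      _ = 1 + d / (d - 1) * -lam := by ring
      _ ≤ 1 + d / (d - 1) * ((∑ i ∈ s, a i) / β - 1) := by gcongr
      _ ≤ ∑ i ∈ s, cappedRatio d β (a i) :=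
        le_sum_cappedRatio_of_forall_ne_one hd hcard hβ ha hcap

end Sum

/-- Lemma: for `φ(x) = min{1, (d−1)x/(d(β−x))}`, if `0 ≤ aᵢ < β` and
`a₁ + ⋯ + a_d ≥ β(1 − λ)` with `λ ≥ 0`, then `∑ φ(aᵢ) ≥ 1 − 5λ`. -/
theorem phi_sum_lower_bound (d : ℕ) (hd : 2 ≤ d) (β : ℝ) (hβ : 0 < β)
    (φ : ℝ → ℝ) (hφ : ∀ x, φ x = min 1 (((d : ℝ) - 1) * x / (d * (β - x))))
    (a : Fin d → ℝ) (ha : ∀ i, 0 ≤ a i ∧ a i < β)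
    (lam : ℝ) (hlam : 0 ≤ lam) (hsum : β * (1 - lam) ≤ ∑ i, a i) :
    1 - 5 * lam ≤ ∑ i, φ (a i) := by
  obtain rfl : φ = cappedRatio d β := funext hφ
  have hd' : (2 : ℝ) ≤ d := mod_cast hd
  have slope_le : (d : ℝ) / (d - 1) ≤ 2 := (div_le_iff₀ (by linarith)).2 (by linarith)
  calc 1 - 5 * lam
    _ ≤ 1 - d / (d - 1) * lam := by gcongr; linarith
    _ ≤ ∑ i, cappedRatio d β (a i) :=
      phi_sum_lower_bound_general (by linarith) (by simp) hβ (fun i _ ↦ (ha i).2) hlam hsum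
end

section
/- Let G = (V, E) be a d-uniform hypergraph with d ≥ 2 and let 0 < ε < 1. Set λ = ε/6 and let β be a real number with β ≥ (8d²/(d−1))·λ^{−3}. Then every HEDCS(G, β, β(1−λ)) H contains an ε-restricted fractional matching (a fractional matching supported on the edges of H in which every edge has value either 1 or at most ε) whose total value is at least μ(G)·(d/(d² − d + 1) − ε/(d−1)). -/
open Finset

/-- `matchNum E` is `μ(G)`, the maximum cardinality of a matching in the
hypergraph with edge set `E`. -/
def matchNum {V : Type*} [DecidableEq V] (E : Finset (Finset V)) : ℕ :=
  (E.powerset.filter (fun M => ∀ e ∈ M, ∀ f ∈ M, e ≠ f → e ∩ f = ∅)).sup Finset.card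

/-!
Split a maximum matching into its members `A` in `H` and the remaining ones `B`, whose degree sums
in `H` are at least `β (1 - λ)`. By linear programming duality, the largest value of a fractional
matching `y ≤ ε` on a subhypergraph of `H` is the least cost of a fractional vertex cover that may
leave hyperedges partly uncovered at price `ε`. A cheap cover would force large degrees onto few
vertices, which contradicts the bound `β` on the degree sums in `H`.

For `d ≥ 3` there are two candidates: a fractional matching on the hyperedges meeting `⋃ B`, and
`A` together with a fractional matching on those of them that avoid `⋃ A`. Adding the bounds on the
costs of the two covers shows that one of the candidates has the required value.

For `d = 2` this comparison is too weak. Instead, limit the load on `⋃ A` to `1 / 3`, which leaves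
a fractional matching of value almost `2 / 3 * #B` on the edges meeting `⋃ B`, and round each member
of `A` to `1` independently with probability `2 / 3`, cancelling the edges that meet a rounded one
and tripling those that meet one that is not rounded. In expectation this gains `2 / 3 * #A` and
loses only the excess of the loads over `1`, which their variance controls.
-/

section FractionalMatching

variable {V : Type*}

/-! ### Incidence counting -/

/-- The total weight that `y` puts on the hyperedges of `F` through `v`. -/
def load [DecidableEq V] (F : Finset (Finset V)) (y : Finset V → ℝ) (v : V) : ℝ :=
  ∑ f ∈ F with v ∈ f, y f

section Incidence

variable [DecidableEq V] {F G : Finset (Finset V)} {U : Finset V}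

lemma load_nonneg {y : Finset V → ℝ} (hy : ∀ f ∈ F, 0 ≤ y f) (v : V) : 0 ≤ load F y v :=
  sum_nonneg fun f hf ↦ hy f (mem_of_mem_filter f hf)

lemma sum_mul_load (hFU : ∀ f ∈ F, f ⊆ U) (x : V → ℝ) (y : Finset V → ℝ) :
    ∑ v ∈ U, x v * load F y v = ∑ f ∈ F, y f * ∑ v ∈ f, x v := by
  simp_rw [load, mul_sum]
  rw [sum_comm' (t' := F) (s' := id) fun v f ↦ by grind]
  exact sum_congr rfl fun f _ ↦ sum_congr rfl fun v _ ↦ mul_comm _ _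

lemma load_eq_of_mem (hF : (F : Set (Finset V)).PairwiseDisjoint id) (y : Finset V → ℝ)
    {f : Finset V} (hf : f ∈ F) {v : V} (hv : v ∈ f) : load F y v = y f := by
  have hsingle : ({g ∈ F | v ∈ g} : Finset (Finset V)) = {f} :=
    eq_singleton_iff_unique_mem.2 ⟨mem_filter.2 ⟨hf, hv⟩, fun g hg ↦
      hF.elim_finset (mem_filter.1 hg).1 hf v (mem_filter.1 hg).2 hv⟩
  rw [load, hsingle, sum_singleton]

lemma load_eq_zero_of_notMem (y : Finset V → ℝ) {v : V} (hv : v ∉ F.biUnion id) :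
    load F y v = 0 := by
  have hempty : ({f ∈ F | v ∈ f} : Finset (Finset V)) = ∅ :=
    filter_eq_empty_iff.2 fun f hf hvf ↦ hv (mem_biUnion.2 ⟨f, hf, hvf⟩)
  rw [load, hempty, sum_empty]

lemma sum_load (F : Finset (Finset V)) (W : Finset V) (y : Finset V → ℝ) :
    ∑ v ∈ W, load F y v = ∑ f ∈ F, y f * #(f ∩ W) := by
  simp_rw [load, sum_filter, inter_comm _ W, ← filter_mem_eq_inter, card_filter, Nat.cast_sum,
    Nat.cast_ite, Nat.cast_one, Nat.cast_zero, mul_sum, mul_ite, mul_one, mul_zero]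
  exact sum_comm

lemma sum_mul_deg (hFU : ∀ f ∈ F, f ⊆ U) (x : V → ℝ) :
    ∑ v ∈ U, x v * (deg F v : ℝ) = ∑ f ∈ F, ∑ v ∈ f, x v := by
  simpa [load, deg] using sum_mul_load hFU x 1

lemma sum_deg_eq_sum_card_inter (F : Finset (Finset V)) (W : Finset V) :
    ∑ v ∈ W, deg F v = ∑ f ∈ F, #(f ∩ W) := by
  simp_rw [deg, card_filter, inter_comm _ W, ← filter_mem_eq_inter, card_filter]
  exact sum_comm

lemma deg_mono (hFG : F ⊆ G) (v : V) : deg F v ≤ deg G v :=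
  card_le_card (filter_subset_filter _ hFG)

lemma deg_filter_not_disjoint (H : Finset (Finset V)) {X : Finset V} {v : V} (hv : v ∈ X) :
    deg {f ∈ H | ¬ Disjoint f X} v = deg H v := by
  rw [deg, deg, filter_filter]
  exact congrArg card (filter_congr fun f _ ↦
    and_iff_right_of_imp fun hvf ↦ not_disjoint_iff.2 ⟨v, hvf, hv⟩)

lemma card_biUnion_id_of_pairwiseDisjoint {A : Finset (Finset V)} {d : ℕ}
    (hA : (A : Set (Finset V)).PairwiseDisjoint id) (hd : ∀ a ∈ A, #a = d) :
    #(A.biUnion id) = d * #A := by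
  rw [card_biUnion hA]
  exact (sum_const_nat hd).trans (mul_comm _ _)

end Incidence

/-! ### Duality for capacitated fractional matchings -/

/-- The dual objective of the linear program that maximises `∑ f ∈ F, y f` subject to `0 ≤ y ≤ δ`
and `load F y ≤ cap` on `U`: the multipliers of the constraints `y f ≤ δ` are eliminated, being
optimal at the amount by which `c` falls short of covering `f`. -/
noncomputable def coverCost (F : Finset (Finset V)) (U : Finset V) (cap : V → ℝ) (δ : ℝ)
    (c : V → ℝ) : ℝ :=
  ∑ v ∈ U, cap v * c v + δ * ∑ f ∈ F, max 0 (1 - ∑ v ∈ f, c v)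

lemma coverCost_nonneg {F : Finset (Finset V)} {U : Finset V} {cap c : V → ℝ} {δ : ℝ}
    (hcap : ∀ v, 0 ≤ cap v) (hδ : 0 ≤ δ) (hc : ∀ v, 0 ≤ c v) : 0 ≤ coverCost F U cap δ c :=
  add_nonneg (sum_nonneg fun v _ ↦ mul_nonneg (hcap v) (hc v))
    (mul_nonneg hδ (sum_nonneg fun _ _ ↦ le_max_left _ _))

/-- The Lagrangian of the linear program with dual objective `coverCost`, where only the constraints
`load F y ≤ cap` are dualised. -/
noncomputable def lagrangian (F : Finset (Finset V)) (U : Finset V) (cap : V → ℝ) (c : V → ℝ)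
    (y : Finset V → ℝ) : ℝ :=
  ∑ f ∈ F, y f * (1 - ∑ v ∈ f, c v) + ∑ v ∈ U, cap v * c v

lemma exists_isSaddlePointOn_lagrangian (F : Finset (Finset V)) (U : Finset V) (cap : V → ℝ)
    {δ : ℝ} (hδ : 0 ≤ δ) :
    ∃ c ∈ Set.Icc (0 : V → ℝ) 1, ∃ y ∈ Set.Icc (0 : Finset V → ℝ) (fun _ ↦ δ),
      IsSaddlePointOn (Set.Icc 0 1) (Set.Icc 0 fun _ ↦ δ) (lagrangian F U cap) c y := by
  have h_left y : ConvexOn ℝ (Set.Icc 0 1) (lagrangian F U cap · y) :=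
    ⟨convex_Icc _ _, fun c _ c' _ a b _ _ hab ↦ le_of_eq <| by
      have hcover (f : Finset V) : 1 - ∑ v ∈ f, (a * c v + b * c' v) =
          a * (1 - ∑ v ∈ f, c v) + b * (1 - ∑ v ∈ f, c' v) := by
        rw [sum_add_distrib, ← mul_sum, ← mul_sum]
        linear_combination -hab
      simp only [lagrangian, Pi.add_apply, Pi.smul_apply, smul_eq_mul, hcover]
      simp only [mul_add, mul_left_comm _ a, mul_left_comm _ b, sum_add_distrib,
        ← mul_sum]
      ring⟩
  have h_right c : ConcaveOn ℝ (Set.Icc 0 fun _ ↦ δ) (lagrangian F U cap c ·) :=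
    ⟨convex_Icc _ _, fun y _ y' _ a b _ _ hab ↦ le_of_eq <| by
      simp only [lagrangian, Pi.add_apply, Pi.smul_apply, smul_eq_mul, add_mul, mul_assoc,
        sum_add_distrib, ← mul_sum]
      linear_combination (∑ v ∈ U, cap v * c v) * hab⟩
  refine Sion.exists_isSaddlePointOn ⟨0, le_rfl, zero_le_one⟩ (convex_Icc _ _) isCompact_Icc
    (fun y _ ↦ (Continuous.lowerSemicontinuous ?_).lowerSemicontinuousOn _)
    (fun y _ ↦ (h_left y).quasiconvexOn) (convex_Icc _ _) ⟨0, le_rfl, fun _ ↦ hδ⟩ isCompact_Icc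
    (fun c _ ↦ (Continuous.upperSemicontinuous ?_).upperSemicontinuousOn _)
    (fun c _ ↦ (h_right c).quasiconcaveOn)
  all_goals unfold lagrangian; fun_prop

section Duality

variable [DecidableEq V] {F : Finset (Finset V)} {U : Finset V} {cap : V → ℝ}

/-- Scaling `f` down by the total relative overload of its vertices loses at most the overload. -/
lemma exists_load_le_sum_sub_overload_le (hFU : ∀ f ∈ F, f ⊆ U) (hcap : ∀ v, 0 ≤ cap v)
    {y : Finset V → ℝ} (hy : ∀ f ∈ F, 0 ≤ y f) :
    ∃ y' : Finset V → ℝ, (∀ f ∈ F, 0 ≤ y' f ∧ y' f ≤ y f) ∧ (∀ v, load F y' v ≤ cap v) ∧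
      ∑ f ∈ F, y f - ∑ v ∈ U, max 0 (load F y v - cap v) ≤ ∑ f ∈ F, y' f := by
  set t : V → ℝ := fun v ↦ max 0 (load F y v - cap v) / load F y v
  have ht0 v : 0 ≤ t v := div_nonneg (le_max_left _ _) (load_nonneg hy v)
  have ht1 v : t v ≤ 1 := div_le_one_of_le₀
    (max_le (load_nonneg hy v) (sub_le_self _ (hcap v))) (load_nonneg hy v)
  have ht_load v : t v * load F y v = max 0 (load F y v - cap v) :=
    div_mul_cancel_of_imp fun h ↦ by simp [h, hcap v]
  set s : Finset V → ℝ := fun f ↦ max 0 (1 - ∑ v ∈ f, t v)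
  have hs1 f : s f ≤ 1 := max_le zero_le_one (sub_le_self _ (sum_nonneg fun v _ ↦ ht0 v))
  refine ⟨fun f ↦ y f * s f, fun f hf ↦ ⟨mul_nonneg (hy f hf) (le_max_left _ _),
    mul_le_of_le_one_right (hy f hf) (hs1 f)⟩, fun v ↦ ?_, ?_⟩
  · have hsv : ∀ f, v ∈ f → s f ≤ 1 - t v := fun f hvf ↦ max_le (sub_nonneg.2 (ht1 v))
      (sub_le_sub_left (single_le_sum (fun u _ ↦ ht0 u) hvf) 1)
    calc load F (fun f ↦ y f * s f) v ≤ load F y v * (1 - t v) := by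
          rw [load, load, sum_mul]
          refine sum_le_sum fun f hf ↦ ?_
          obtain ⟨hfF, hvf⟩ := mem_filter.1 hf
          exact mul_le_mul_of_nonneg_left (hsv f hvf) (hy f hfF)
      _ = load F y v - max 0 (load F y v - cap v) := by rw [← ht_load]; ring
      _ ≤ cap v := by linarith [le_max_right 0 (load F y v - cap v)]
  · simp_rw [← ht_load, sum_mul_load hFU, ← sum_sub_distrib, ← mul_one_sub]
    exact sum_le_sum fun f hf ↦ mul_le_mul_of_nonneg_left (le_max_right _ _) (hy f hf)

lemma lagrangian_eq_sum_add_sum_mul (hFU : ∀ f ∈ F, f ⊆ U) (c : V → ℝ) (y : Finset V → ℝ) :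
    lagrangian F U cap c y = ∑ f ∈ F, y f + ∑ v ∈ U, c v * (cap v - load F y v) := by
  simp only [lagrangian, mul_sub, mul_one, sum_sub_distrib, sum_mul_load hFU, mul_comm (cap _)]
  ring

/-- At a saddle point `(c, y)`, the best response to `c` has value `coverCost F U cap δ c`, and the
best response to `y` shows that `y` exceeds this value at least by its total overload. -/
theorem exists_coverCost_le_sum (hFU : ∀ f ∈ F, f ⊆ U) (hcap : ∀ v, 0 ≤ cap v) {δ : ℝ}
    (hδ : 0 ≤ δ) :
    ∃ (y : Finset V → ℝ) (c : V → ℝ), (∀ f ∈ F, 0 ≤ y f ∧ y f ≤ δ) ∧ (∀ v, load F y v ≤ cap v) ∧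
      (∀ v, 0 ≤ c v ∧ c v ≤ 1) ∧ coverCost F U cap δ c ≤ ∑ f ∈ F, y f := by
  obtain ⟨c, hc, y, hy, hsaddle⟩ := exists_isSaddlePointOn_lagrangian F U cap hδ
  obtain ⟨y', hy'y, hload, hsum⟩ := exists_load_le_sum_sub_overload_le hFU hcap
    fun f (_ : f ∈ F) ↦ hy.1 f
  refine ⟨y', c, fun f hf ↦ ⟨(hy'y f hf).1, (hy'y f hf).2.trans (hy.2 f)⟩, hload,
    fun v ↦ ⟨hc.1 v, hc.2 v⟩, le_trans ?_ hsum⟩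
  let yBest (f : Finset V) : ℝ := if 0 ≤ 1 - ∑ v ∈ f, c v then δ else 0
  let cBest (v : V) : ℝ := if cap v ≤ load F y v then 1 else 0
  have hyBest : yBest ∈ Set.Icc (0 : Finset V → ℝ) fun _ ↦ δ :=
    ⟨fun f ↦ by dsimp only [yBest]; split_ifs <;> simp [hδ],
      fun f ↦ by dsimp only [yBest]; split_ifs <;> simp [hδ]⟩
  have hcBest : cBest ∈ Set.Icc (0 : V → ℝ) 1 :=
    ⟨fun v ↦ by dsimp only [cBest]; split_ifs <;> simp,
      fun v ↦ by dsimp only [cBest]; split_ifs <;> simp⟩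
  calc coverCost F U cap δ c = lagrangian F U cap c yBest := by
        rw [coverCost, lagrangian, add_comm, mul_sum]
        congr 1
        refine sum_congr rfl fun f _ ↦ ?_
        dsimp only [yBest]
        split_ifs with h
        · rw [max_eq_right h]
        · rw [max_eq_left (not_le.1 h).le, mul_zero, zero_mul]
    _ ≤ lagrangian F U cap cBest y := hsaddle cBest hcBest yBest hyBest
    _ = ∑ f ∈ F, y f - ∑ v ∈ U, max 0 (load F y v - cap v) := by
        rw [lagrangian_eq_sum_add_sum_mul hFU, sub_eq_add_neg, ← sum_neg_distrib]
        congr 1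
        refine sum_congr rfl fun v _ ↦ ?_
        dsimp only [cBest]
        split_ifs with h
        · rw [max_eq_right (sub_nonneg.2 h)]; ring
        · rw [max_eq_left (sub_nonpos.2 (not_le.1 h).le)]; ring

end Duality

/-! ### Restricted fractional matchings -/

/-- `y` is an `ε`-restricted fractional matching supported on the hyperedges of `H`. -/
structure IsRestrictedFractionalMatching [DecidableEq V] (H : Finset (Finset V)) (ε : ℝ)
    (y : Finset V → ℝ) : Prop where
  eq_zero_of_notMem : ∀ e, e ∉ H → y e = 0
  mem_Icc : ∀ e, 0 ≤ y e ∧ y e ≤ 1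
  load_le_one : ∀ v, load H y v ≤ 1
  eq_one_or_le : ∀ e ∈ H, y e = 1 ∨ y e ≤ ε

section RestrictedFractionalMatching

variable [DecidableEq V] {H F S : Finset (Finset V)}

lemma load_ite_mem (hFH : F ⊆ H) (y : Finset V → ℝ) (v : V) :
    load H (fun e ↦ if e ∈ F then y e else 0) v = load F y v := by
  rw [load, sum_ite_mem, filter_inter, inter_eq_right.2 hFH, load]

lemma deg_le_one_of_pairwiseDisjoint (hS : (S : Set (Finset V)).PairwiseDisjoint id) (v : V) :
    deg S v ≤ 1 :=
  card_le_one.2 fun a ha b hb ↦ by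
    rw [mem_filter] at ha hb
    exact hS.elim_finset ha.1 hb.1 v ha.2 hb.2

lemma exists_isRestrictedFractionalMatching_of_disjoint {ε : ℝ} (hε0 : 0 ≤ ε) (hε1 : ε ≤ 1)
    (hSH : S ⊆ H) (hFH : F ⊆ H) (hS : (S : Set (Finset V)).PairwiseDisjoint id)
    (hF : ∅ ∉ F) (hFS : ∀ f ∈ F, Disjoint f (S.biUnion id)) {y : Finset V → ℝ}
    (hy : ∀ f ∈ F, 0 ≤ y f ∧ y f ≤ ε) (hload : ∀ v, load F y v ≤ 1) :
    ∃ y', IsRestrictedFractionalMatching H ε y' ∧ ∑ e ∈ H, y' e = #S + ∑ f ∈ F, y f := by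
  have hFnS : ∀ f ∈ F, f ∉ S := fun f hf hfS ↦ hF <| by
    have hff : Disjoint f f := (hFS f hf).mono_right (subset_biUnion_of_mem id hfS)
    rwa [← (disjoint_self_iff_empty f).1 hff]
  refine ⟨fun e ↦ (if e ∈ S then 1 else 0) + if e ∈ F then y e else 0, ⟨fun e he ↦ ?_, fun e ↦ ?_,
    fun v ↦ ?_, fun e _ ↦ ?_⟩, ?_⟩
  · rw [if_neg fun h ↦ he (hSH h), if_neg fun h ↦ he (hFH h), add_zero]
  · grind
  · have hload_add : load H (fun e ↦ (if e ∈ S then 1 else 0) + if e ∈ F then y e else 0) v =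
        deg S v + load F y v := by
      rw [← load_ite_mem hFH]
      simpa [load, deg, sum_add_distrib] using load_ite_mem hSH 1 v
    rw [hload_add]
    by_cases hv : v ∈ S.biUnion id
    · have hload_zero : load F y v = 0 := sum_eq_zero fun f hf ↦ by
        rw [mem_filter] at hf
        exact absurd hv (disjoint_left.1 (hFS f hf.1) hf.2)
      rw [hload_zero, add_zero]
      exact_mod_cast deg_le_one_of_pairwiseDisjoint hS v
    · have hdeg_zero : deg S v = 0 := card_eq_zero.2 <| filter_eq_empty_iff.2 fun e he hve ↦
        hv (mem_biUnion.2 ⟨e, he, hve⟩)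
      simpa [hdeg_zero] using hload v
  · have := hy e
    grind
  · rw [sum_add_distrib, sum_ite_mem, sum_ite_mem, inter_eq_right.2 hSH, inter_eq_right.2 hFH]
    simp

end RestrictedFractionalMatching

/-! ### Covers of hypergraphs with bounded degree sums -/

lemma mul_add_ite_le_sq_add {β s x D : ℝ} (hs : 0 ≤ s) (hβ : 0 ≤ β) (hx0 : 0 ≤ x) (hx1 : x ≤ 1)
    (hD : 0 ≤ D) (p : Prop) [Decidable p] :
    4 * s ^ 2 * β * (x * D) + (if p then 4 * s * β * D - β ^ 2 else 0) ≤
      4 * s ^ 2 * D ^ 2 + (s + 1) ^ 2 * β ^ 2 * x := by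
  have : 0 ≤ 1 - x := sub_nonneg.2 hx1
  have h₁ : 0 ≤ x * (2 * s * D - (s + 1) * β) ^ 2 := by positivity
  have h₂ : 0 ≤ (1 - x) * (2 * s * D - β) ^ 2 := by positivity
  have h₃ : 0 ≤ (1 - x) * (s * D) ^ 2 := by positivity
  have h₄ : 0 ≤ x * (s * β * D) := by positivity
  have h₅ : 0 ≤ x * β ^ 2 := by positivity
  split_ifs <;> nlinarith only [h₁, h₂, h₃, h₄, h₅]

lemma card_le_sum_add_sum_max (F : Finset (Finset V)) (c : V → ℝ) :
    (#F : ℝ) ≤ ∑ f ∈ F, ∑ v ∈ f, c v + ∑ f ∈ F, max 0 (1 - ∑ v ∈ f, c v) := by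
  rw [card_eq_sum_ones, Nat.cast_sum, ← sum_add_distrib]
  exact sum_le_sum fun f _ ↦ by
    rw [Nat.cast_one]
    linarith [le_max_right 0 (1 - ∑ v ∈ f, c v)]

section Cover

variable [DecidableEq V] {H F : Finset (Finset V)} {U W : Finset V} {β : ℝ}

lemma sum_deg_sq_le (hFH : F ⊆ H) (hFU : ∀ f ∈ F, f ⊆ U)
    (hH : ∀ e ∈ H, ∑ v ∈ e, (deg H v : ℝ) ≤ β) : ∑ v ∈ U, (deg F v : ℝ) ^ 2 ≤ #F * β :=
  calc ∑ v ∈ U, (deg F v : ℝ) ^ 2 ≤ ∑ v ∈ U, (deg H v : ℝ) * deg F v :=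
        sum_le_sum fun v _ ↦ by
          have : (deg F v : ℝ) ≤ deg H v := mod_cast deg_mono hFH v
          rw [sq]; gcongr
    _ = ∑ f ∈ F, ∑ v ∈ f, (deg H v : ℝ) := sum_mul_deg hFU _
    _ ≤ #F * β := by
        rw [← nsmul_eq_mul]
        exact sum_le_card_nsmul _ _ _ fun f hf ↦ hH f (hFH hf)

/-- Sum over `U` the pointwise estimate `mul_add_ite_le_sq_add` between cover and degrees; the
degree sums of the hyperedges control `∑ v ∈ U, (deg F v) ^ 2`. -/
lemma four_mul_sum_deg_le_coverCost (hFH : F ⊆ H) (hFU : ∀ f ∈ F, f ⊆ U) (hWU : W ⊆ U)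
    (hβ : 0 < β) (hH : ∀ e ∈ H, ∑ v ∈ e, (deg H v : ℝ) ≤ β) {δ : ℝ} (hδ : 4 ≤ δ * β)
    {c : V → ℝ} (hc : ∀ v, 0 ≤ c v ∧ c v ≤ 1) {s : ℝ} (hs : 0 ≤ s) :
    4 * s * ∑ v ∈ W, (deg F v : ℝ) ≤ β * ((s + 1) ^ 2 * coverCost F U (fun _ ↦ 1) δ c + #W) := by
  set deficit := ∑ f ∈ F, max 0 (1 - ∑ v ∈ f, c v) with hdeficit
  have hcost : coverCost F U (fun _ ↦ 1) δ c = ∑ v ∈ U, c v + δ * deficit := by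
    simp [coverCost, hdeficit]
  have : 0 ≤ deficit := sum_nonneg fun _ _ ↦ le_max_left _ _
  have hcard : (#F : ℝ) ≤ ∑ v ∈ U, c v * deg F v + deficit :=
    (sum_mul_deg hFU c).symm ▸ card_le_sum_add_sum_max F c
  have hsum := sum_le_sum fun v (_ : v ∈ U) ↦ mul_add_ite_le_sq_add hs hβ.le (hc v).1 (hc v).2
    (Nat.cast_nonneg (deg F v)) (v ∈ W)
  simp only [sum_add_distrib, ← mul_sum, sum_ite_mem, inter_eq_right.2 hWU, sum_sub_distrib,
    sum_const, nsmul_eq_mul] at hsum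
  have hsq : 4 * s ^ 2 * ∑ v ∈ U, (deg F v : ℝ) ^ 2 ≤
      4 * s ^ 2 * ((∑ v ∈ U, c v * deg F v + deficit) * β) := by
    gcongr
    exact (sum_deg_sq_le hFH hFU hH).trans (by gcongr)
  have hscale : 4 * s ^ 2 * (deficit * β) ≤ (s + 1) ^ 2 * (δ * β) * (deficit * β) := by
    refine mul_le_mul_of_nonneg_right ?_ (by positivity)
    linarith [mul_le_mul_of_nonneg_left hδ (sq_nonneg (s + 1))]
  rw [hcost]
  refine le_of_mul_le_mul_left ?_ hβ
  linarith only [hsum, hsq, hscale]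

end Cover

/-! ### Splitting a maximum matching -/

/-- A matching of `d`-element hyperedges, split into a part `A` contained in `H` and a part `B`
whose members have large degree sum with respect to the `d`-uniform hypergraph `H`, all of whose
hyperedges have degree sum at most `β`. A maximum matching of a hypergraph splits in this way with
respect to each of its HEDCS. -/
structure IsMatchingSplit [DecidableEq V] (H A B : Finset (Finset V)) (d : ℕ) (β l : ℝ) :
    Prop where
  card_eq_left : ∀ e ∈ H, #e = d
  card_eq_right : ∀ b ∈ B, #b = d
  subset : A ⊆ H
  sum_deg_le : ∀ e ∈ H, ∑ v ∈ e, (deg H v : ℝ) ≤ β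
  le_sum_deg : ∀ b ∈ B, β * (1 - l) ≤ ∑ v ∈ b, (deg H v : ℝ)
  pairwiseDisjoint : ((A ∪ B : Finset (Finset V)) : Set (Finset V)).PairwiseDisjoint id
  disjoint : Disjoint A B

namespace IsMatchingSplit

variable [DecidableEq V] {H A B : Finset (Finset V)} {d : ℕ} {β l : ℝ}

lemma pairwiseDisjoint_left (h : IsMatchingSplit H A B d β l) :
    (A : Set (Finset V)).PairwiseDisjoint id :=
  h.pairwiseDisjoint.subset (coe_subset.2 subset_union_left)

lemma pairwiseDisjoint_right (h : IsMatchingSplit H A B d β l) :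
    (B : Set (Finset V)).PairwiseDisjoint id :=
  h.pairwiseDisjoint.subset (coe_subset.2 subset_union_right)

lemma card_biUnion_left (h : IsMatchingSplit H A B d β l) : #(A.biUnion id) = d * #A :=
  card_biUnion_id_of_pairwiseDisjoint h.pairwiseDisjoint_left
    fun a ha ↦ h.card_eq_left a (h.subset ha)

lemma card_biUnion_right (h : IsMatchingSplit H A B d β l) : #(B.biUnion id) = d * #B :=
  card_biUnion_id_of_pairwiseDisjoint h.pairwiseDisjoint_right h.card_eq_right

lemma disjoint_biUnion (h : IsMatchingSplit H A B d β l) :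
    Disjoint (A.biUnion id) (B.biUnion id) := by
  simp only [disjoint_biUnion_left, disjoint_biUnion_right]
  exact fun b hb a ha ↦ h.pairwiseDisjoint (mem_union_left B ha) (mem_union_right A hb)
    (disjoint_iff_ne.1 h.disjoint a ha b hb)

lemma mul_card_le_sum_deg (h : IsMatchingSplit H A B d β l) :
    β * (1 - l) * #B ≤
      ∑ v ∈ B.biUnion id, (deg {f ∈ H | ¬ Disjoint f (B.biUnion id)} v : ℝ) := by
  rw [sum_congr rfl fun v hv ↦ by rw [deg_filter_not_disjoint H hv],
    sum_biUnion h.pairwiseDisjoint_right, mul_comm, ← nsmul_eq_mul]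
  exact card_nsmul_le_sum _ _ _ h.le_sum_deg

end IsMatchingSplit

/-! ### Rank at least three -/

lemma left_endpoint_nonneg {d l : ℝ} (hd : 3 ≤ d) (hl : 0 ≤ l) :
    0 ≤ 4 * d ^ 2 * (d - 1) * (1 - l) * (d ^ 2 - d + 1)
      - ((d + 1) ^ 2 * (d - 1) ^ 2 + (d ^ 2 - d + 1) ^ 2) * ((1 - 6 * l) * d)
      - (d * (d - 1) ^ 2 + d) * (d ^ 2 - d + 1) := by
  obtain ⟨x, hx, rfl⟩ : ∃ x, 0 ≤ x ∧ d = 3 + x := ⟨d - 3, by linarith, by ring⟩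
  ring_nf
  positivity

lemma right_endpoint_nonneg {d l : ℝ} (hd : 3 ≤ d) (hl : 0 ≤ l) (hl' : 6 * l ≤ 1) :
    0 ≤ 4 * d ^ 2 * (d - 1) * (1 - l) * (d ^ 2 - d + 1 - (1 - 6 * l) * d)
      - ((d + 1) ^ 2 * (d - 1) ^ 2 + (d ^ 2 - d + 1) ^ 2) * ((1 - 6 * l) * d)
      + ((d ^ 2 - d + 1) ^ 2 + d) * ((1 - 6 * l) * d)
      - (d * (d - 1) ^ 2 + d) * (d ^ 2 - d + 1) := by
  have hdrop : 0 ≤ 4 * d ^ 2 * (d - 1) * (l * ((1 - 6 * l) * d)) := by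
    have : 0 ≤ d - 1 := by linarith
    have : 0 ≤ 1 - 6 * l := by linarith
    positivity
  have hlinear : 0 ≤ 4 * d ^ 2 * (d - 1) * ((1 - l) * (d ^ 2 - d + 1) - (1 - 6 * l) * d)
      - ((d + 1) ^ 2 * (d - 1) ^ 2 + (d ^ 2 - d + 1) ^ 2) * ((1 - 6 * l) * d)
      + ((d ^ 2 - d + 1) ^ 2 + d) * ((1 - 6 * l) * d)
      - (d * (d - 1) ^ 2 + d) * (d ^ 2 - d + 1) := by
    obtain ⟨x, hx, rfl⟩ : ∃ x, 0 ≤ x ∧ d = 3 + x := ⟨d - 3, by linarith, by ring⟩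
    ring_nf
    positivity
  linarith only [hdrop, hlinear]

/-- If both conclusions failed, `hcover` would give an inequality that is affine in `h` and
contradicts `left_endpoint_nonneg` at `h = 0` and `right_endpoint_nonneg` at the largest
possible `h`. -/
lemma value_le_or_le_of_cover_bound {d l g h T₀ T₁ : ℝ} (hd : 3 ≤ d) (hl : 0 ≤ l) (hl' : 6 * l ≤ 1)
    (hg : 0 ≤ g) (hh : 0 ≤ h) (hT₁ : 0 ≤ T₁)
    (hcover : 4 * d ^ 2 * (d - 1) * (1 - l) * g ≤ (d + 1) ^ 2 * (d - 1) ^ 2 * T₀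
      + d * (d - 1) ^ 2 * (h + g) + (d ^ 2 - d + 1) ^ 2 * T₁ + d * g) :
    (h + g) * (d / (d ^ 2 - d + 1) - 6 * l / (d - 1)) ≤ T₀ ∨
      (h + g) * (d / (d ^ 2 - d + 1) - 6 * l / (d - 1)) ≤ h + T₁ := by
  have hd1 : 0 < d - 1 := by linarith
  have hq : 0 < d ^ 2 - d + 1 := by nlinarith
  have hpoly₀ := left_endpoint_nonneg hd hl
  have hpoly₁ := right_endpoint_nonneg hd hl hl'
  set q := d ^ 2 - d + 1
  obtain ⟨p, hp⟩ : ∃ p, h + g = q * p := ⟨(h + g) / q, by field_simp⟩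
  have hp0 : 0 ≤ p := nonneg_of_mul_nonneg_right (hp ▸ add_nonneg hh hg) hq
  set t := (1 - 6 * l) * d * p with ht
  have hvalue : (h + g) * (d / q - 6 * l / (d - 1)) ≤ t := by
    have hdq : d ≤ q / (d - 1) := by rw [le_div_iff₀ hd1]; linarith
    calc (h + g) * (d / q - 6 * l / (d - 1)) = d * p - 6 * l * p * (q / (d - 1)) := by
          rw [hp]; field_simp
      _ ≤ d * p - 6 * l * p * d := by gcongr
      _ = t := by ring
  by_contra! hlt
  have hT₀ : T₀ < t := hlt.1.trans_le hvalue
  have hT₁' : T₁ < t - h := by linarith [hlt.2]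
  have hg_eq : g = q * p - h := by linarith
  have hneg : 4 * d ^ 2 * (d - 1) * (1 - l) * (q * p - h)
      - ((d + 1) ^ 2 * (d - 1) ^ 2 + q ^ 2) * t + (q ^ 2 + d) * h
      - (d * (d - 1) ^ 2 + d) * (q * p) < 0 := by
    rw [hp, hg_eq] at hcover
    have h₀ : (d + 1) ^ 2 * (d - 1) ^ 2 * T₀ < (d + 1) ^ 2 * (d - 1) ^ 2 * t := by gcongr
    have h₁ : q ^ 2 * T₁ < q ^ 2 * (t - h) := by gcongr
    linarith only [hcover, h₀, h₁]
  have ht0 : 0 < t := by linarith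
  refine (mul_neg_of_pos_of_neg ht0 hneg).not_ge ?_
  linear_combination mul_nonneg (sub_nonneg.2 (by linarith : h ≤ t)) (mul_nonneg hp0 hpoly₀) +
    mul_nonneg hh (mul_nonneg hp0 hpoly₁)

section RankThree

variable [DecidableEq V]

/-- A hyperedge of size at most `k + 1` that meets `Y` has at most `k` vertices in `X`. -/
lemma sum_deg_le_sum_deg_add_mul {F : Finset (Finset V)} {X Y : Finset V} {k : ℕ}
    (hF : ∀ f ∈ F, #f ≤ k + 1) (hXY : Disjoint X Y) :
    ∑ v ∈ X, deg F v ≤ ∑ v ∈ X, deg {f ∈ F | Disjoint f Y} v + k * ∑ v ∈ Y, deg F v := by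
  simp only [sum_deg_eq_sum_card_inter, sum_filter, mul_sum, ← sum_add_distrib]
  refine sum_le_sum fun f hf ↦ ?_
  split_ifs with hfY
  · exact Nat.le_add_right _ _
  · have hpos : 1 ≤ #(f ∩ Y) := card_pos.2 (not_disjoint_iff_nonempty_inter.1 hfY)
    have hdisj : Disjoint (f ∩ X) (f ∩ Y) := hXY.mono inter_subset_right inter_subset_right
    have hcard : #(f ∩ X) + #(f ∩ Y) ≤ k + 1 := by
      rw [← card_union_of_disjoint hdisj]
      exact (card_le_card (union_subset inter_subset_left inter_subset_left)).trans (hF f hf)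
    nlinarith

namespace IsMatchingSplit

variable {H A B F F₀ : Finset (Finset V)} {d : ℕ} {β l δ : ℝ}

lemma cover_bound (h : IsMatchingSplit H A B d β l) (hd : 2 ≤ d) (hβ : 0 < β) (hδ : 4 ≤ δ * β)
    (hF : F = {f ∈ H | ¬ Disjoint f (B.biUnion id)})
    (hF₀ : F₀ = {f ∈ F | Disjoint f (A.biUnion id)}) {c c₀ : V → ℝ}
    (hc : ∀ v, 0 ≤ c v ∧ c v ≤ 1) (hc₀ : ∀ v, 0 ≤ c₀ v ∧ c₀ v ≤ 1) :
    4 * (d : ℝ) ^ 2 * (d - 1) * (1 - l) * #B ≤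
      (d + 1 : ℝ) ^ 2 * (d - 1) ^ 2 * coverCost F ((H ∪ B).biUnion id) (fun _ ↦ 1) δ c +
        d * (d - 1 : ℝ) ^ 2 * (#A + #B) +
        (d ^ 2 - d + 1 : ℝ) ^ 2 * coverCost F₀ ((H ∪ B).biUnion id) (fun _ ↦ 1) δ c₀ +
        d * #B := by
  set U := (H ∪ B).biUnion id
  set X := B.biUnion id
  set Y := A.biUnion id
  have hHU : ∀ f ∈ H, f ⊆ U := fun f hf ↦ subset_biUnion_of_mem id (mem_union_left B hf)
  have hXU : X ⊆ U := biUnion_subset_biUnion_of_subset_left id subset_union_right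
  have hYU : Y ⊆ U := biUnion_subset_biUnion_of_subset_left id (h.subset.trans subset_union_left)
  have hFH : F ⊆ H := hF ▸ filter_subset _ _
  have hF₀F : F₀ ⊆ F := hF₀ ▸ filter_subset _ _
  obtain ⟨m, rfl⟩ : ∃ m, d = m + 1 := ⟨d - 1, by lia⟩
  have hXY : Disjoint X Y := h.disjoint_biUnion.symm
  have hdeg : β * (1 - l) * #B ≤ ∑ v ∈ X, (deg F v : ℝ) := hF ▸ h.mul_card_le_sum_deg
  have hdeg_split : ∑ v ∈ X, (deg F v : ℝ) ≤
      ∑ v ∈ X, (deg F₀ v : ℝ) + m * ∑ v ∈ Y, (deg F v : ℝ) := by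
    rw [hF₀]
    exact_mod_cast sum_deg_le_sum_deg_add_mul (fun f hf ↦ (h.card_eq_left f (hFH hf)).le) hXY
  have hm : (0 : ℝ) < m := by norm_cast; lia
  have hcover := four_mul_sum_deg_le_coverCost hFH (fun f hf ↦ hHU f (hFH hf))
    (union_subset hXU hYU) hβ h.sum_deg_le hδ hc (s := m + 1) (by positivity)
  have hcover₀ := four_mul_sum_deg_le_coverCost (hF₀F.trans hFH) (fun f hf ↦ hHU f (hFH (hF₀F hf)))
    hXU hβ h.sum_deg_le hδ hc₀ (s := (m + 1) * m) (by positivity)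
  rw [sum_union hXY, card_union_of_disjoint hXY, h.card_biUnion_left, h.card_biUnion_right]
    at hcover
  rw [h.card_biUnion_right] at hcover₀
  push_cast at *
  refine le_of_mul_le_mul_left ?_ hβ
  have h₁ := mul_le_mul_of_nonneg_left hcover (sq_nonneg (m : ℝ))
  have h₂ := mul_le_mul_of_nonneg_left hdeg_split (by positivity : (0:ℝ) ≤ 4 * (m + 1) * m)
  have h₃ := mul_le_mul_of_nonneg_left hdeg (by positivity : (0:ℝ) ≤ 4 * (m + 1) ^ 2 * m)
  linarith only [hcover₀, h₁, h₂, h₃]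

theorem exists_isRestrictedFractionalMatching_of_three_le (h : IsMatchingSplit H A B d β l)
    (hd : 3 ≤ d) (hl : 0 < l) (hl' : 6 * l ≤ 1) (hβ : 4 ≤ 6 * l * β) :
    ∃ y, IsRestrictedFractionalMatching H (6 * l) y ∧
      (#A + #B : ℝ) * (d / ((d : ℝ) ^ 2 - d + 1) - 6 * l / (d - 1)) ≤ ∑ e ∈ H, y e := by
  set F := {f ∈ H | ¬ Disjoint f (B.biUnion id)} with hF
  set F₀ := {f ∈ F | Disjoint f (A.biUnion id)} with hF₀
  set U := (H ∪ B).biUnion id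
  have hβ0 : 0 < β := pos_of_mul_pos_right (by linarith : 0 < 6 * l * β) (by positivity)
  have hHU : ∀ f ∈ H, f ⊆ U := fun f hf ↦ subset_biUnion_of_mem id (mem_union_left B hf)
  have hFH : F ⊆ H := filter_subset _ _
  have hF₀H : F₀ ⊆ H := (filter_subset _ _).trans hFH
  have hH : ∅ ∉ H := fun hmem ↦ by have := h.card_eq_left ∅ hmem; simp at this; lia
  obtain ⟨y, c, hy, hload, hc, hcy⟩ := exists_coverCost_le_sum (cap := fun _ ↦ 1)
    (fun f hf ↦ hHU f (hFH hf)) (fun _ ↦ zero_le_one) (by positivity : 0 ≤ 6 * l)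
  obtain ⟨y₀, c₀, hy₀, hload₀, hc₀, hcy₀⟩ := exists_coverCost_le_sum (cap := fun _ ↦ 1)
    (fun f hf ↦ hHU f (hF₀H hf)) (fun _ ↦ zero_le_one) (by positivity : 0 ≤ 6 * l)
  have hcover := h.cover_bound (by lia) hβ0 hβ hF hF₀ hc hc₀
  have hcost₀ := coverCost_nonneg (F := F₀) (U := U) (cap := fun _ ↦ 1) (fun _ ↦ zero_le_one)
    (by positivity : 0 ≤ 6 * l) fun v ↦ (hc₀ v).1
  rcases value_le_or_le_of_cover_bound (by exact_mod_cast hd) hl.le hl' (Nat.cast_nonneg _)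
    (Nat.cast_nonneg _) hcost₀ hcover with hvalue | hvalue
  · obtain ⟨y', hy', hsum⟩ := exists_isRestrictedFractionalMatching_of_disjoint (by positivity) hl'
      (empty_subset H) hFH (by simp) (fun hmem ↦ hH (hFH hmem)) (by simp) hy hload
    refine ⟨y', hy', (hvalue.trans hcy).trans ?_⟩
    simp [hsum]
  · obtain ⟨y', hy', hsum⟩ := exists_isRestrictedFractionalMatching_of_disjoint (by positivity) hl'
      h.subset hF₀H h.pairwiseDisjoint_left (fun hmem ↦ hH (hF₀H hmem))
      (fun f hf ↦ (mem_filter.1 hf).2) hy₀ hload₀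
    exact ⟨y', hy', hsum ▸ hvalue.trans (by gcongr)⟩

end IsMatchingSplit

end RankThree

/-! ### Rounding matched hyperedges -/

section Rounding

/-- The method of conditional expectations: for independent Bernoulli variables `ξ a` of mean `p`,
the left-hand side is the expectation of the right-hand side. -/
lemma exists_zero_one_le_sum_sub_mul_sum_sq {α ι : Type*} (A : Finset α)
    (X : Finset ι) (w : α → ℝ) (r : ι → α → ℝ) (κ : ℝ) {p : ℝ} (hp0 : 0 ≤ p) (hp1 : p ≤ 1)
    (z : ι → ℝ) :
    ∃ ξ : α → ℝ, (∀ a, ξ a = 0 ∨ ξ a = 1) ∧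
      -κ * ∑ u ∈ X, (z u ^ 2 + p * (1 - p) * ∑ a ∈ A, r u a ^ 2) ≤
        ∑ a ∈ A, w a * (ξ a - p) - κ * ∑ u ∈ X, (z u + ∑ a ∈ A, r u a * (ξ a - p)) ^ 2 := by
  classical
  induction A using Finset.induction_on generalizing z with
  | empty => exact ⟨0, fun _ ↦ Or.inl rfl, by simp⟩
  | insert a A ha ih =>
    let gain (e : ℝ) : ℝ := w a * (e - p) -
      κ * ∑ u ∈ X, ((z u + r u a * (e - p)) ^ 2 + p * (1 - p) * ∑ b ∈ A, r u b ^ 2)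
    have h_average : -κ * ∑ u ∈ X, (z u ^ 2 + p * (1 - p) * ∑ b ∈ insert a A, r u b ^ 2) =
        p * gain 1 + (1 - p) * gain 0 := by
      have hsum : ∑ u ∈ X, (z u ^ 2 + p * (1 - p) * ∑ b ∈ insert a A, r u b ^ 2) =
          p * ∑ u ∈ X, ((z u + r u a * (1 - p)) ^ 2 + p * (1 - p) * ∑ b ∈ A, r u b ^ 2) +
          (1 - p) * ∑ u ∈ X, ((z u + r u a * (0 - p)) ^ 2 + p * (1 - p) * ∑ b ∈ A, r u b ^ 2) := by
        rw [mul_sum, mul_sum, ← sum_add_distrib]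
        exact sum_congr rfl fun u _ ↦ by rw [sum_insert ha]; ring
      rw [hsum]
      ring
    obtain ⟨e, he, h_gain⟩ : ∃ e : ℝ, (e = 0 ∨ e = 1) ∧
        p * gain 1 + (1 - p) * gain 0 ≤ gain e := by
      rcases le_total (gain 0) (gain 1) with h | h
      · exact ⟨1, Or.inr rfl, by nlinarith⟩
      · exact ⟨0, Or.inl rfl, by nlinarith⟩
    obtain ⟨ξ, hξ, hle⟩ := ih fun u ↦ z u + r u a * (e - p)
    have h_update (x : α → ℝ) : ∑ b ∈ insert a A, x b * (Function.update ξ a e b - p) =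
        x a * (e - p) + ∑ b ∈ A, x b * (ξ b - p) := by
      rw [sum_insert ha, Function.update_self]
      congr 1
      exact sum_congr rfl fun b hb ↦ by rw [Function.update_of_ne (ne_of_mem_of_not_mem hb ha)]
    refine ⟨Function.update ξ a e, fun b ↦ ?_, ?_⟩
    · rcases eq_or_ne b a with rfl | hb
      · rwa [Function.update_self]
      · rw [Function.update_of_ne hb]
        exact hξ b
    · simp only [h_update, h_average, ← add_assoc]
      linarith

lemma max_zero_sub_le_sq_div {θ : ℝ} (hθ : 0 < θ) (x : ℝ) : max 0 (x - θ) ≤ x ^ 2 / (4 * θ) := by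
  refine max_le (by positivity) ((le_div_iff₀ (by positivity)).2 ?_)
  linarith [sq_nonneg (x - 2 * θ)]

variable [DecidableEq V] {A F : Finset (Finset V)} {U f : Finset V} {p : ℝ} {ξ η : Finset V → ℝ}

/-- The weights `η` conditioned on the outcome `ξ` of rounding the members of `A`, where `ξ a = 0`
has probability `1 - p`: if `f` meets exactly one member `a` of `A`, then its weight is multiplied
by `ξ a / p`. -/
noncomputable def roundedWeight (A : Finset (Finset V)) (p : ℝ) (ξ η : Finset V → ℝ)
    (f : Finset V) : ℝ :=
  η f * (1 + ∑ a ∈ A with ¬ Disjoint f a, (ξ a - p) / p)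

lemma sum_roundedWeight (G : Finset (Finset V)) :
    ∑ f ∈ G, roundedWeight A p ξ η f =
      ∑ f ∈ G, η f + ∑ a ∈ A, (∑ f ∈ G with ¬ Disjoint f a, η f) / p * (ξ a - p) := by
  simp only [roundedWeight, mul_add, mul_one, sum_add_distrib, mul_sum, sum_div, sum_mul,
    sum_filter]
  rw [sum_comm]
  congr 1
  refine sum_congr rfl fun a _ ↦ sum_congr rfl fun f _ ↦ ?_
  split_ifs <;> ring

lemma card_filter_not_disjoint_le_one (hA : (A : Set (Finset V)).PairwiseDisjoint id)
    (hf : #(f ∩ A.biUnion id) ≤ 1) : #{a ∈ A | ¬ Disjoint f a} ≤ 1 := by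
  refine card_le_one.2 fun a ha b hb ↦ ?_
  obtain ⟨ha, hfa⟩ := mem_filter.1 ha
  obtain ⟨hb, hfb⟩ := mem_filter.1 hb
  obtain ⟨u, huf, hua⟩ := not_disjoint_iff.1 hfa
  obtain ⟨v, hvf, hvb⟩ := not_disjoint_iff.1 hfb
  obtain rfl : u = v := card_le_one.1 hf u (mem_inter.2 ⟨huf, mem_biUnion.2 ⟨a, ha, hua⟩⟩) v
    (mem_inter.2 ⟨hvf, mem_biUnion.2 ⟨b, hb, hvb⟩⟩)
  exact hA.elim_finset ha hb u hua hvb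

lemma roundedWeight_eq_mul_div (hf : #{a ∈ A | ¬ Disjoint f a} ≤ 1) {a : Finset V} (ha : a ∈ A)
    (hfa : ¬ Disjoint f a) (hp : p ≠ 0) : roundedWeight A p ξ η f = η f * (ξ a / p) := by
  have hmem : a ∈ ({a ∈ A | ¬ Disjoint f a} : Finset (Finset V)) := mem_filter.2 ⟨ha, hfa⟩
  rw [roundedWeight, eq_singleton_iff_unique_mem.2
    ⟨hmem, fun b hb ↦ card_le_one.1 hf b hb a hmem⟩, sum_singleton]
  field_simp
  ring

lemma roundedWeight_mem_Icc (hf : #{a ∈ A | ¬ Disjoint f a} ≤ 1) (hp0 : 0 < p) (hp1 : p ≤ 1)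
    (hξ : ∀ a, ξ a = 0 ∨ ξ a = 1) (hη : 0 ≤ η f) :
    roundedWeight A p ξ η f ∈ Set.Icc 0 (η f / p) := by
  by_cases h : ∃ a ∈ A, ¬ Disjoint f a
  · obtain ⟨a, ha, hfa⟩ := h
    rw [roundedWeight_eq_mul_div hf ha hfa hp0.ne']
    rcases hξ a with h | h <;> rw [h] <;> constructor
    · simp
    · simpa using div_nonneg hη hp0.le
    · positivity
    · rw [mul_one_div]
  · have hempty : ({a ∈ A | ¬ Disjoint f a} : Finset (Finset V)) = ∅ :=
      filter_eq_empty_iff.2 fun a ha hfa ↦ h ⟨a, ha, hfa⟩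
    rw [roundedWeight, hempty, sum_empty, add_zero, mul_one]
    exact ⟨hη, le_div_self hη hp0 hp1⟩

lemma load_roundedWeight (F : Finset (Finset V)) (v : V) :
    load F (roundedWeight A p ξ η) v = load F η v +
      ∑ a ∈ A, load {f ∈ F | ¬ Disjoint f a} η v / p * (ξ a - p) := by
  simp_rw [load, sum_roundedWeight, filter_comm]

lemma sum_sum_load_le {k : ℕ} (hA : (A : Set (Finset V)).PairwiseDisjoint id)
    (hFA : ∀ f ∈ F, #(f ∩ A.biUnion id) ≤ 1) (hFk : ∀ f ∈ F, #f ≤ k + 1)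
    (hη : ∀ f ∈ F, 0 ≤ η f) :
    ∑ a ∈ A, ∑ v ∈ U \ A.biUnion id, load {f ∈ F | ¬ Disjoint f a} η v ≤ k * ∑ f ∈ F, η f := by
  simp_rw [sum_load, sum_filter]
  rw [sum_comm, mul_sum]
  refine sum_le_sum fun f hf ↦ ?_
  rw [← sum_filter, sum_const, nsmul_eq_mul]
  have hcard_mul : #{a ∈ A | ¬ Disjoint f a} * #(f ∩ (U \ A.biUnion id)) ≤ k := by
    obtain h | ⟨a, ha⟩ := ({a ∈ A | ¬ Disjoint f a} : Finset (Finset V)).eq_empty_or_nonempty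
    · simp [h]
    · obtain ⟨ha, hfa⟩ := mem_filter.1 ha
      have hmeet : 0 < #(f ∩ A.biUnion id) := card_pos.2 <| not_disjoint_iff_nonempty_inter.1
        fun h ↦ hfa (h.mono_right (subset_biUnion_of_mem id ha))
      have hsdiff : #(f ∩ (U \ A.biUnion id)) ≤ #(f \ A.biUnion id) := card_le_card (by grind)
      have := card_inter_add_card_sdiff f (A.biUnion id)
      have := hFk f hf
      exact (mul_le_of_le_one_left (Nat.zero_le _)
        (card_filter_not_disjoint_le_one hA (hFA f hf))).trans (by lia)
  calc (#{a ∈ A | ¬ Disjoint f a} : ℝ) * (η f * #(f ∩ (U \ A.biUnion id)))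
      = η f * (#{a ∈ A | ¬ Disjoint f a} * #(f ∩ (U \ A.biUnion id)) : ℕ) := by
        push_cast; ring
    _ ≤ k * η f := by
        rw [mul_comm (k : ℝ)]
        exact mul_le_mul_of_nonneg_left (by exact_mod_cast hcard_mul) (hη f hf)

lemma sum_sum_load_sq_le {k : ℕ} {M : ℝ} (hA : (A : Set (Finset V)).PairwiseDisjoint id)
    (hFA : ∀ f ∈ F, #(f ∩ A.biUnion id) ≤ 1) (hFk : ∀ f ∈ F, #f ≤ k + 1)
    (hη : ∀ f ∈ F, 0 ≤ η f) (hM0 : 0 ≤ M)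
    (hM : ∀ a ∈ A, ∀ v ∉ A.biUnion id, load {f ∈ F | ¬ Disjoint f a} η v ≤ M) :
    ∑ v ∈ U \ A.biUnion id, ∑ a ∈ A, load {f ∈ F | ¬ Disjoint f a} η v ^ 2 ≤
      M * (k * ∑ f ∈ F, η f) := by
  refine le_trans ?_ (mul_le_mul_of_nonneg_left (sum_sum_load_le (U := U) hA hFA hFk hη) hM0)
  rw [sum_comm, mul_sum]
  refine sum_le_sum fun a ha ↦ ?_
  rw [mul_sum]
  refine sum_le_sum fun v hv ↦ ?_
  rw [sq]
  exact mul_le_mul_of_nonneg_right (hM a ha v (mem_sdiff.1 hv).2)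
    (load_nonneg (fun f hf ↦ hη f (mem_filter.1 hf).1) v)

lemma sum_overload_roundedWeight_le {θ : ℝ} (hA : (A : Set (Finset V)).PairwiseDisjoint id)
    (hFA : ∀ f ∈ F, #(f ∩ A.biUnion id) ≤ 1) (hp0 : 0 < p) (hp1 : p ≤ 1) (hθ : 0 < θ)
    (hξ : ∀ a, ξ a = 0 ∨ ξ a = 1) (hη : ∀ f ∈ F, 0 ≤ η f) (hload : ∀ v, load F η v ≤ 1 - θ)
    (hloadA : ∀ v ∈ A.biUnion id, load F η v ≤ p) :
    ∑ v ∈ U, max 0 (load F (roundedWeight A p ξ η) v - 1) ≤ 1 / (4 * θ) *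
      ∑ v ∈ U \ A.biUnion id,
        (∑ a ∈ A, load {f ∈ F | ¬ Disjoint f a} η v / p * (ξ a - p)) ^ 2 := by
  have hoverload : ∀ v ∈ A.biUnion id, max 0 (load F (roundedWeight A p ξ η) v - 1) = 0 := by
    refine fun v hv ↦ max_eq_left (sub_nonpos.2 ?_)
    calc load F (roundedWeight A p ξ η) v ≤ load F η v / p := by
          rw [load, load, sum_div]
          refine sum_le_sum fun f hf ↦ ?_
          have hfF := (mem_filter.1 hf).1
          exact (roundedWeight_mem_Icc (card_filter_not_disjoint_le_one hA (hFA f hfF)) hp0 hp1 hξ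
            (hη f hfF)).2
      _ ≤ 1 := div_le_one_of_le₀ (hloadA v hv) hp0.le
  rw [← sum_subset (s₁ := U \ A.biUnion id) sdiff_subset fun v hvU hv ↦
    hoverload v (by grind), mul_sum]
  refine sum_le_sum fun v _ ↦ ?_
  rw [load_roundedWeight, one_div_mul_eq_div]
  refine le_trans (max_le_max_left 0 ?_) (max_zero_sub_le_sq_div hθ _)
  linarith [hload v]

lemma exists_le_card_add_sum_roundedWeight_sub_overload {k : ℕ} {M θ : ℝ}
    (hA : (A : Set (Finset V)).PairwiseDisjoint id)
    (hFA : ∀ f ∈ F, #(f ∩ A.biUnion id) ≤ 1) (hFk : ∀ f ∈ F, #f ≤ k + 1) (hp0 : 0 < p)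
    (hp1 : p ≤ 1) (hθ : 0 < θ) (hη : ∀ f ∈ F, 0 ≤ η f) (hload : ∀ v, load F η v ≤ 1 - θ)
    (hloadA : ∀ v ∈ A.biUnion id, load F η v ≤ p) (hM0 : 0 ≤ M)
    (hM : ∀ a ∈ A, ∀ v ∉ A.biUnion id, load {f ∈ F | ¬ Disjoint f a} η v ≤ M) :
    ∃ ξ : Finset V → ℝ, (∀ a, ξ a = 0 ∨ ξ a = 1) ∧
      (1 - p) * #A + (1 - (1 - p) * k * M / (4 * p * θ)) * ∑ f ∈ F, η f ≤
        #{a ∈ A | ξ a = 0} + (∑ f ∈ F, roundedWeight A p ξ η f -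
          ∑ v ∈ U, max 0 (load F (roundedWeight A p ξ η) v - 1)) := by
  set X := U \ A.biUnion id
  obtain ⟨ξ, hξ, hξ_le⟩ := exists_zero_one_le_sum_sub_mul_sum_sq A X
    (fun a ↦ (∑ f ∈ F with ¬ Disjoint f a, η f) / p - 1)
    (fun v a ↦ load {f ∈ F | ¬ Disjoint f a} η v / p) (1 / (4 * θ)) hp0.le hp1 0
  refine ⟨ξ, hξ, ?_⟩
  have hvariance : 1 / (4 * θ) *
      ∑ v ∈ X, p * (1 - p) * ∑ a ∈ A, (load {f ∈ F | ¬ Disjoint f a} η v / p) ^ 2 ≤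
      (1 - p) * k * M / (4 * p * θ) * ∑ f ∈ F, η f := by
    have : 0 ≤ 1 - p := sub_nonneg.2 hp1
    calc _ = (1 - p) / (4 * p * θ) * ∑ v ∈ X, ∑ a ∈ A, load {f ∈ F | ¬ Disjoint f a} η v ^ 2 := by
          simp_rw [div_pow, ← sum_div, ← mul_sum, ← sum_div]
          field_simp
      _ ≤ (1 - p) / (4 * p * θ) * (M * (k * ∑ f ∈ F, η f)) := by
          gcongr
          exact sum_sum_load_sq_le hA hFA hFk hη hM0 hM
      _ = _ := by ring
  have hcard : (#{a ∈ A | ξ a = 0} : ℝ) = (1 - p) * #A - ∑ a ∈ A, (ξ a - p) := by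
    have hξ_ite : ∀ a ∈ A, (if ξ a = 0 then (1 : ℝ) else 0) = (1 - p) - (ξ a - p) := fun a _ ↦ by
      rcases hξ a with h | h <;> simp [h]
    rw [← sum_boole, sum_congr rfl hξ_ite, sum_sub_distrib, sum_const, nsmul_eq_mul, mul_comm]
  have hoverload := sum_overload_roundedWeight_le (U := U) hA hFA hp0 hp1 hθ hξ hη hload hloadA
  rw [sum_roundedWeight, hcard, sum_sub_distrib]
  simp only [Pi.zero_apply, zero_add, ne_eq, OfNat.ofNat_ne_zero, not_false_eq_true, zero_pow,
    sub_mul, one_mul, sum_sub_distrib, neg_mul] at hξ_le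
  linarith

/-- Rounding each member of `A` to weight `1` with probability `1 - p`, and cancelling the
hyperedges that meet a member of weight `1`. -/
theorem exists_subset_le_card_add_sum {k : ℕ} {M θ : ℝ}
    (hA : (A : Set (Finset V)).PairwiseDisjoint id) (hFU : ∀ f ∈ F, f ⊆ U)
    (hFA : ∀ f ∈ F, #(f ∩ A.biUnion id) ≤ 1) (hFk : ∀ f ∈ F, #f ≤ k + 1) (hp0 : 0 < p)
    (hp1 : p ≤ 1) (hθ : 0 < θ) (hη : ∀ f ∈ F, 0 ≤ η f) (hload : ∀ v, load F η v ≤ 1 - θ)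
    (hloadA : ∀ v ∈ A.biUnion id, load F η v ≤ p) (hM0 : 0 ≤ M)
    (hM : ∀ a ∈ A, ∀ v ∉ A.biUnion id, load {f ∈ F | ¬ Disjoint f a} η v ≤ M) :
    ∃ S ⊆ A, ∃ y : Finset V → ℝ, (∀ f ∈ F, 0 ≤ y f ∧ y f ≤ η f / p) ∧ (∀ v, load F y v ≤ 1) ∧
      (∀ f ∈ F, ¬ Disjoint f (S.biUnion id) → y f = 0) ∧
      (1 - p) * #A + (1 - (1 - p) * k * M / (4 * p * θ)) * ∑ f ∈ F, η f ≤ #S + ∑ f ∈ F, y f := by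
  obtain ⟨ξ, hξ, hξ_le⟩ := exists_le_card_add_sum_roundedWeight_sub_overload (U := U) hA hFA hFk
    hp0 hp1 hθ hη hload hloadA hM0 hM
  have hcard : ∀ f ∈ F, #{a ∈ A | ¬ Disjoint f a} ≤ 1 := fun f hf ↦
    card_filter_not_disjoint_le_one hA (hFA f hf)
  have hround := fun f hf ↦ roundedWeight_mem_Icc (hcard f hf) hp0 hp1 hξ (hη f hf)
  obtain ⟨y, hy, hyload, hysum⟩ := exists_load_le_sum_sub_overload_le hFU (cap := fun _ ↦ 1)
    (fun _ ↦ zero_le_one) fun f hf ↦ (hround f hf).1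
  refine ⟨{a ∈ A | ξ a = 0}, filter_subset _ _, y,
    fun f hf ↦ ⟨(hy f hf).1, (hy f hf).2.trans (hround f hf).2⟩, hyload, fun f hf hfS ↦ ?_,
    hξ_le.trans (by gcongr)⟩
  obtain ⟨a, haS, hfa⟩ : ∃ a ∈ {a ∈ A | ξ a = 0}, ¬ Disjoint f a := by
    simpa [disjoint_biUnion_right, and_assoc] using hfS
  obtain ⟨ha, hξa⟩ := mem_filter.1 haS
  refine le_antisymm ((hy f hf).2.trans_eq ?_) (hy f hf).1
  rw [roundedWeight_eq_mul_div (hcard f hf) ha hfa hp0.ne', hξa, zero_div, mul_zero]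

end Rounding

/-! ### Rank two -/

section RankTwo

/-- With `D := D₂ + τ`, use `D₁ ≤ τ + (β - D)` and `β - D ≤ β ^ 2 / (4 * D)`. -/
lemma mul_le_mul_add_sq_div_four_mul {s c z D₁ D₂ τ β : ℝ} (hs : 0 ≤ s) (hc : 0 ≤ c) (hz : 0 ≤ z)
    (hD₂ : 0 < D₂) (hτ : 0 < τ) (hD : D₁ + D₂ ≤ β) (hscz : s ≤ c + z) :
    s * D₁ ≤ τ * s + β ^ 2 / 4 * (c / D₂ + z / τ) := by
  have hD₁ : D₁ ≤ τ + β ^ 2 / 4 / (D₂ + τ) := by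
    have : β - (D₂ + τ) ≤ β ^ 2 / 4 / (D₂ + τ) :=
      (le_div_iff₀ (by positivity)).2 (by linarith [sq_nonneg (β / 2 - (D₂ + τ))])
    linarith
  calc s * D₁ ≤ s * (τ + β ^ 2 / 4 / (D₂ + τ)) := by gcongr
    _ = τ * s + β ^ 2 / 4 * (s / (D₂ + τ)) := by ring
    _ ≤ τ * s + β ^ 2 / 4 * ((c + z) / (D₂ + τ)) := by gcongr
    _ = τ * s + β ^ 2 / 4 * (c / (D₂ + τ) + z / (D₂ + τ)) := by rw [add_div]
    _ ≤ τ * s + β ^ 2 / 4 * (c / D₂ + z / τ) := by gcongr <;> linarith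

lemma sum_mul_le_of_card_eq_two {f : Finset V} (hf : #f = 2) {s c D : V → ℝ} {τ β : ℝ}
    (hs : ∀ v, 0 ≤ s v) (hc : ∀ v, 0 ≤ c v) (hsc : ∀ v, s v + c v ≤ 1) (hτ : 0 < τ)
    (hD : ∀ v ∈ f, 0 < D v) (hβ : ∑ v ∈ f, D v ≤ β) :
    ∑ v ∈ f, s v * D v ≤ τ * ∑ v ∈ f, s v +
      β ^ 2 / 4 * (∑ v ∈ f, c v / D v + 2 / τ * max 0 (1 - ∑ v ∈ f, c v)) := by
  classical
  obtain ⟨u, v, huv, rfl⟩ := card_eq_two.1 hf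
  simp only [sum_pair huv] at *
  set z := max 0 (1 - (c u + c v))
  have hz0 : 0 ≤ z := le_max_left _ _
  have hz : 1 - (c u + c v) ≤ z := le_max_right _ _
  have hu := mul_le_mul_add_sq_div_four_mul (hs u) (hc v) hz0 (hD v (by simp)) hτ hβ
    (by linarith [hsc u])
  have hv := mul_le_mul_add_sq_div_four_mul (hs v) (hc u) hz0 (hD u (by simp)) hτ
    (add_comm (D u) _ ▸ hβ) (by linarith [hsc v])
  linear_combination hu + hv

variable [DecidableEq V] {H F A B : Finset (Finset V)} {U : Finset V} {β l : ℝ}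

lemma sum_mul_deg_mul_deg_le (hFH : F ⊆ H) (hFU : ∀ f ∈ F, f ⊆ U) (hF : ∀ f ∈ F, #f = 2)
    (hβ : ∀ f ∈ F, ∑ v ∈ f, (deg H v : ℝ) ≤ β) {s c : V → ℝ} (hs : ∀ v, 0 ≤ s v)
    (hc : ∀ v, 0 ≤ c v) (hsc : ∀ v, s v + c v ≤ 1) {τ : ℝ} (hτ : 0 < τ) :
    ∑ v ∈ U, s v * deg H v * deg F v ≤ τ * ∑ v ∈ U, s v * deg F v +
      β ^ 2 / 4 * coverCost F U (fun _ ↦ 1) (2 / τ) c := by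
  have hcover : ∑ v ∈ U, c v / deg H v * deg F v ≤ ∑ v ∈ U, c v := by
    refine sum_le_sum fun v _ ↦ ?_
    rw [div_mul_eq_mul_div]
    have hdeg : (deg F v : ℝ) ≤ deg H v := by exact_mod_cast deg_mono hFH v
    exact div_le_of_le_mul₀ (Nat.cast_nonneg _) (hc v) (by gcongr; exact hc v)
  have hdeg_pos : ∀ f ∈ F, ∀ v ∈ f, (0 : ℝ) < deg H v := fun f hf v hv ↦
    Nat.cast_pos.2 <| card_pos.2 ⟨f, mem_filter.2 ⟨hFH hf, hv⟩⟩
  calc ∑ v ∈ U, s v * deg H v * deg F v = ∑ f ∈ F, ∑ v ∈ f, s v * deg H v := sum_mul_deg hFU _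
    _ ≤ _ := sum_le_sum fun f hf ↦
        sum_mul_le_of_card_eq_two (hF f hf) hs hc hsc hτ (hdeg_pos f hf) (hβ f hf)
    _ = τ * ∑ v ∈ U, s v * deg F v + β ^ 2 / 4 * (∑ v ∈ U, c v / deg H v * deg F v +
          2 / τ * ∑ f ∈ F, max 0 (1 - ∑ v ∈ f, c v)) := by
        simp only [sum_mul_deg hFU, sum_add_distrib, ← mul_sum]
    _ ≤ _ := by
        simp only [coverCost, one_mul]
        gcongr

/-- The amount by which the vertex cover `c` falls short of covering the member of the matching `B`
through `v`. -/
noncomputable def shortfall (B : Finset (Finset V)) (c : V → ℝ) : V → ℝ :=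
  load B fun b ↦ max 0 (1 - ∑ v ∈ b, c v)

lemma shortfall_nonneg (c : V → ℝ) (v : V) : 0 ≤ shortfall B c v :=
  load_nonneg (fun _ _ ↦ le_max_left _ _) v

lemma shortfall_add_le_one (hB : (B : Set (Finset V)).PairwiseDisjoint id) {c : V → ℝ}
    (hc : ∀ v, 0 ≤ c v ∧ c v ≤ 1) (v : V) : shortfall B c v + c v ≤ 1 := by
  by_cases hv : v ∈ B.biUnion id
  · obtain ⟨b, hb, hvb⟩ := mem_biUnion.1 hv
    have hcb : c v ≤ ∑ u ∈ b, c u := single_le_sum (fun u _ ↦ (hc u).1) hvb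
    rw [shortfall, load_eq_of_mem hB _ hb hvb, ← le_sub_iff_add_le]
    exact max_le (sub_nonneg.2 (hc v).2) (sub_le_sub_left hcb 1)
  · rw [shortfall, load_eq_zero_of_notMem _ hv, zero_add]
    exact (hc v).2

lemma sum_mul_shortfall (hBU : ∀ b ∈ B, b ⊆ U) (x c : V → ℝ) :
    ∑ v ∈ U, x v * shortfall B c v = ∑ b ∈ B, max 0 (1 - ∑ v ∈ b, c v) * ∑ v ∈ b, x v :=
  sum_mul_load hBU x _

lemma shortfall_mul_deg (H : Finset (Finset V)) (c : V → ℝ) (v : V) :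
    shortfall B c v * (deg {f ∈ H | ¬ Disjoint f (B.biUnion id)} v : ℝ) =
      shortfall B c v * deg H v := by
  by_cases hv : v ∈ B.biUnion id
  · rw [deg_filter_not_disjoint H hv]
  · simp only [shortfall, load_eq_zero_of_notMem _ hv, zero_mul]

lemma load_filter_not_disjoint_le (hF : ∀ f ∈ F, #f = 2) {y : Finset V → ℝ} {δ : ℝ} (hδ : 0 ≤ δ)
    (hy : ∀ f ∈ F, y f ≤ δ) {a : Finset V} {v : V} (hv : v ∉ a) :
    load {f ∈ F | ¬ Disjoint f a} y v ≤ #a * δ := by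
  have hsub : {f ∈ {f ∈ F | ¬ Disjoint f a} | v ∈ f} ⊆ a.image fun w ↦ {v, w} := fun f hf ↦ by
    simp only [mem_filter] at hf
    obtain ⟨⟨hfF, hfa⟩, hvf⟩ := hf
    obtain ⟨w, hwf, hwa⟩ := not_disjoint_iff.1 hfa
    have hvw : v ≠ w := fun hvw ↦ hv (hvw ▸ hwa)
    refine mem_image.2 ⟨w, hwa, eq_of_subset_of_card_le (by grind) ?_⟩
    rw [hF f hfF, card_pair hvw]
  calc load {f ∈ F | ¬ Disjoint f a} y v ≤ #{f ∈ {f ∈ F | ¬ Disjoint f a} | v ∈ f} • δ :=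
        sum_le_card_nsmul _ _ _ fun f hf ↦ hy f (by simp only [mem_filter] at hf; exact hf.1.1)
    _ ≤ #a * δ := by
        rw [nsmul_eq_mul]
        gcongr
        exact (card_le_card hsub).trans card_image_le

/-- Scaling `y` by `1 - θ` leaves room for the fluctuations of the rounding; the vertices of `A`
carry load at most `1 / 3`, the probability with which the members of `A` are not rounded to `1`. -/
lemma exists_subset_le_card_add_sum_of_card_eq_two
    (hA : (A : Set (Finset V)).PairwiseDisjoint id) (hA₂ : ∀ a ∈ A, #a = 2)
    (hF₂ : ∀ f ∈ F, #f = 2) (hFA : ∀ f ∈ F, #(f ∩ A.biUnion id) ≤ 1) {θ δ : ℝ} (hθ0 : 0 < θ)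
    (hθ1 : θ ≤ 1) (hδ : 0 ≤ δ) {y : Finset V → ℝ} (hy : ∀ f ∈ F, 0 ≤ y f ∧ y f ≤ δ)
    (hload : ∀ v, load F y v ≤ 1) (hloadA : ∀ v ∈ A.biUnion id, load F y v ≤ 1 / 3) :
    ∃ S ⊆ A, ∃ y' : Finset V → ℝ, (∀ f ∈ F, 0 ≤ y' f ∧ y' f ≤ 3 * δ) ∧ (∀ v, load F y' v ≤ 1) ∧
      (∀ f ∈ F, ¬ Disjoint f (S.biUnion id) → y' f = 0) ∧
      2 / 3 * #A + (1 - δ / θ) * ((1 - θ) * ∑ f ∈ F, y f) ≤ #S + ∑ f ∈ F, y' f := by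
  have hθ1' : 0 ≤ 1 - θ := sub_nonneg.2 hθ1
  have hscale v : load F (fun f ↦ (1 - θ) * y f) v = (1 - θ) * load F y v := (mul_sum ..).symm
  have hscale_le : ∀ f ∈ F, (1 - θ) * y f ≤ δ := fun f hf ↦
    (mul_le_of_le_one_left (hy f hf).1 (by linarith)).trans (hy f hf).2
  obtain ⟨S, hSA, y', hy', hload', hyS, hsum⟩ := exists_subset_le_card_add_sum (k := 1)
    (M := 2 * δ) (p := 1 / 3) (η := fun f ↦ (1 - θ) * y f) hA
    (fun f hf ↦ subset_biUnion_of_mem id hf) hFA (fun f hf ↦ (hF₂ f hf).le) (by norm_num)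
    (by norm_num) hθ0 (fun f hf ↦ mul_nonneg hθ1' (hy f hf).1)
    (fun v ↦ hscale v ▸ mul_le_of_le_one_right hθ1' (hload v))
    (fun v hv ↦ hscale v ▸ (mul_le_of_le_one_left (load_nonneg (fun f hf ↦ (hy f hf).1) v)
      (by linarith)).trans (hloadA v hv))
    (by positivity)
    fun a ha v hv ↦ by
      have hva : v ∉ a := fun hva ↦ hv (mem_biUnion.2 ⟨a, ha, hva⟩)
      simpa only [hA₂ a ha, Nat.cast_two] using load_filter_not_disjoint_le hF₂ hδ hscale_le hva
  refine ⟨S, hSA, y', fun f hf ↦ ⟨(hy' f hf).1, (hy' f hf).2.trans ?_⟩, hload', hyS, ?_⟩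
  · linarith [hscale_le f hf]
  · have hloss : (1 - 1 / 3) * ((1 : ℕ) : ℝ) * (2 * δ) / (4 * (1 / 3) * θ) = δ / θ := by
      push_cast
      field_simp
      ring
    rw [← mul_sum, hloss] at hsum
    linarith

namespace IsMatchingSplit

lemma mul_sum_max_le_coverCost (h : IsMatchingSplit H A B 2 β l) (hβ : 0 < β) (hl0 : 0 < l)
    (hl1 : l ≤ 1) {c : V → ℝ} (hc : ∀ v, 0 ≤ c v ∧ c v ≤ 1) :
    (2 - 8 * l) * ∑ b ∈ B, max 0 (1 - ∑ v ∈ b, c v) ≤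
      coverCost {f ∈ H | ¬ Disjoint f (B.biUnion id)} ((H ∪ B).biUnion id) (fun _ ↦ 1)
        (2 / (l * β)) c := by
  set U := (H ∪ B).biUnion id
  set n := ∑ b ∈ B, max 0 (1 - ∑ v ∈ b, c v) with hn
  have : 0 ≤ n := sum_nonneg fun _ _ ↦ le_max_left _ _
  have hHU : ∀ f ∈ H, f ⊆ U := fun f hf ↦ subset_biUnion_of_mem id (mem_union_left B hf)
  have hBU : ∀ b ∈ B, b ⊆ U := fun b hb ↦ subset_biUnion_of_mem id (mem_union_right H hb)
  have hsum_shortfall : ∑ v ∈ U, shortfall B c v = 2 * n := by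
    rw [mul_comm, hn, sum_mul]
    simpa using (sum_mul_shortfall hBU 1 c).trans <| sum_congr rfl fun b hb ↦ by
      simp [h.card_eq_right b hb]
  have hsum_deg : β * (1 - l) * n ≤ ∑ v ∈ U, shortfall B c v * deg H v := by
    simp_rw [mul_comm (shortfall B c _)]
    rw [sum_mul_shortfall hBU, hn, mul_comm, sum_mul]
    exact sum_le_sum fun b hb ↦ mul_le_mul_of_nonneg_left (h.le_sum_deg b hb) (le_max_left _ _)
  have hsum_sq : β * ∑ v ∈ U, shortfall B c v * deg H v - β ^ 2 / 4 * ∑ v ∈ U, shortfall B c v ≤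
      ∑ v ∈ U, shortfall B c v * deg H v * deg H v := by
    rw [mul_sum, mul_sum, ← sum_sub_distrib]
    refine sum_le_sum fun v _ ↦ ?_
    linarith [mul_nonneg (shortfall_nonneg (B := B) c v) (sq_nonneg ((deg H v : ℝ) - β / 2))]
  have hcover := sum_mul_deg_mul_deg_le (filter_subset _ _)
    (fun f hf ↦ hHU f (mem_filter.1 hf).1) (fun f hf ↦ h.card_eq_left f (mem_filter.1 hf).1)
    (fun f hf ↦ h.sum_deg_le f (mem_filter.1 hf).1) (shortfall_nonneg (B := B) c)
    (fun v ↦ (hc v).1) (shortfall_add_le_one h.pairwiseDisjoint_right hc) (mul_pos hl0 hβ)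
    (F := {f ∈ H | ¬ Disjoint f (B.biUnion id)})
  have hshortfall_sq v :
      shortfall B c v * deg H v * (deg {f ∈ H | ¬ Disjoint f (B.biUnion id)} v : ℝ) =
        shortfall B c v * deg H v * deg H v := by rw [mul_right_comm, shortfall_mul_deg]
  simp only [hshortfall_sq, shortfall_mul_deg] at hcover
  refine le_of_mul_le_mul_left ?_ (by positivity : 0 < β ^ 2 / 4)
  have h₁ : β * (1 - l) * (β * (1 - l) * n) ≤ β * (1 - l) * ∑ v ∈ U, shortfall B c v * deg H v :=
    mul_le_mul_of_nonneg_left hsum_deg (mul_nonneg hβ.le (sub_nonneg.2 hl1))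
  have h₂ : 0 ≤ β ^ 2 * (n * l ^ 2) := by positivity
  rw [hsum_shortfall] at hsum_sq
  linarith

lemma mul_card_le_two_mul_sum_add_coverCost (h : IsMatchingSplit H A B 2 β l) (hβ : 0 < β)
    (hl : 0 < l) (hl' : 4 * l ≤ 1) {c : V → ℝ} (hc : ∀ v, 0 ≤ c v ∧ c v ≤ 1) :
    (2 - 8 * l) * #B ≤ 2 * ∑ v ∈ B.biUnion id, c v +
      coverCost {f ∈ H | ¬ Disjoint f (B.biUnion id)} ((H ∪ B).biUnion id) (fun _ ↦ 1)
        (2 / (l * β)) c := by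
  have hcard : (#B : ℝ) ≤ ∑ v ∈ B.biUnion id, c v + ∑ b ∈ B, max 0 (1 - ∑ v ∈ b, c v) :=
    (card_le_sum_add_sum_max B c).trans_eq (by rw [sum_biUnion h.pairwiseDisjoint_right]; rfl)
  have hX : 0 ≤ ∑ v ∈ B.biUnion id, c v := sum_nonneg fun v _ ↦ (hc v).1
  linarith [mul_le_mul_of_nonneg_left hcard (by linarith : 0 ≤ 2 - 8 * l), mul_nonneg hl.le hX,
    h.mul_sum_max_le_coverCost hβ hl (by linarith) hc]

lemma mul_card_le_coverCost (h : IsMatchingSplit H A B 2 β l) (hβ : 0 < β) (hl : 0 < l)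
    (hl' : 4 * l ≤ 1) {c : V → ℝ} (hc : ∀ v, 0 ≤ c v ∧ c v ≤ 1) :
    2 / 3 * (1 - 4 * l) * #B ≤
      coverCost {f ∈ H | ¬ Disjoint f (B.biUnion id)} ((H ∪ B).biUnion id)
        (fun v ↦ if v ∈ A.biUnion id then 1 / 3 else 1) (2 / (3 * (l * β))) c := by
  set X := B.biUnion id with hX
  set U := (H ∪ B).biUnion id
  have hXU : X ⊆ U := biUnion_subset_biUnion_of_subset_left _ subset_union_right
  have hcap : ∑ v ∈ U, c v + 2 * ∑ v ∈ X, c v ≤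
      3 * ∑ v ∈ U, (if v ∈ A.biUnion id then 1 / 3 else 1) * c v := by
    rw [← inter_eq_right.2 hXU, ← sum_ite_mem, mul_sum, mul_sum, ← sum_add_distrib]
    refine sum_le_sum fun v _ ↦ ?_
    have hcv := (hc v).1
    by_cases hv : v ∈ X
    · rw [if_pos hv, if_neg (disjoint_right.1 h.disjoint_biUnion hv)]
      linarith
    · rw [if_neg hv]
      split_ifs <;> linarith
  have hcover := h.mul_card_le_two_mul_sum_add_coverCost hβ hl hl' hc
  simp only [coverCost, one_mul, ← hX] at hcover ⊢
  rw [show 2 / (l * β) = 3 * (2 / (3 * (l * β))) by field_simp] at hcover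
  linarith

lemma exists_mul_card_le_sum (h : IsMatchingSplit H A B 2 β l) (hβ : 0 < β) (hl : 0 < l)
    (hl' : 4 * l ≤ 1) :
    ∃ y : Finset V → ℝ,
      (∀ f ∈ ({f ∈ H | ¬ Disjoint f (B.biUnion id)} : Finset _),
        0 ≤ y f ∧ y f ≤ 2 / (3 * (l * β))) ∧
      (∀ v, load {f ∈ H | ¬ Disjoint f (B.biUnion id)} y v ≤
        if v ∈ A.biUnion id then 1 / 3 else 1) ∧
      2 / 3 * (1 - 4 * l) * #B ≤ ∑ f ∈ H with ¬ Disjoint f (B.biUnion id), y f := by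
  obtain ⟨y, c, hy, hload, hc, hle⟩ := exists_coverCost_le_sum
    (F := {f ∈ H | ¬ Disjoint f (B.biUnion id)}) (U := (H ∪ B).biUnion id)
    (cap := fun v ↦ if v ∈ A.biUnion id then 1 / 3 else 1) (δ := 2 / (3 * (l * β)))
    (fun f hf ↦ subset_biUnion_of_mem id (mem_union_left B (mem_filter.1 hf).1))
    (fun v ↦ by positivity) (by positivity)
  exact ⟨y, hy, hload, (h.mul_card_le_coverCost hβ hl hl' hc).trans hle⟩

lemma card_inter_biUnion_le_one (h : IsMatchingSplit H A B 2 β l) {f : Finset V} (hf : f ∈ H)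
    (hfB : ¬ Disjoint f (B.biUnion id)) : #(f ∩ A.biUnion id) ≤ 1 := by
  have hdisj : Disjoint (f ∩ A.biUnion id) (f ∩ B.biUnion id) :=
    h.disjoint_biUnion.mono inter_subset_right inter_subset_right
  have hcard := card_le_card (union_subset (inter_subset_left (s₁ := f) (s₂ := A.biUnion id))
    (inter_subset_left (s₂ := B.biUnion id)))
  rw [card_union_of_disjoint hdisj, h.card_eq_left f hf] at hcard
  have : 0 < #(f ∩ B.biUnion id) := card_pos.2 (not_disjoint_iff_nonempty_inter.1 hfB)
  lia

lemma exists_subset_mul_le_card_add_sum (h : IsMatchingSplit H A B 2 β l) (hl : 0 < l)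
    (hl' : 4 * l ≤ 1) (hβ : 1 ≤ l ^ 3 * β) (hF : F = {f ∈ H | ¬ Disjoint f (B.biUnion id)}) :
    ∃ S ⊆ A, ∃ y : Finset V → ℝ, (∀ f ∈ F, 0 ≤ y f ∧ y f ≤ 6 * l) ∧ (∀ v, load F y v ≤ 1) ∧
      (∀ f ∈ F, ¬ Disjoint f (S.biUnion id) → y f = 0) ∧
      (#A + #B : ℝ) * (2 / 3 - 6 * l) ≤ #S + ∑ f ∈ F, y f := by
  have hβ0 : 0 < β := pos_of_mul_pos_right (zero_lt_one.trans_le hβ) (by positivity)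
  obtain ⟨y, hy, hload, hle⟩ := h.exists_mul_card_le_sum hβ0 hl hl'
  rw [← hF] at hy hload hle
  set δ := 2 / (3 * (l * β)) with hδ
  have hδl : δ ≤ l ^ 2 := by
    rw [hδ, div_le_iff₀ (by positivity)]
    linarith
  have hFH : F ⊆ H := hF ▸ filter_subset _ _
  have hFB : ∀ f ∈ F, ¬ Disjoint f (B.biUnion id) := hF ▸ fun f hf ↦ (mem_filter.1 hf).2
  obtain ⟨S, hSA, y', hy', hload', hyS, hsum⟩ := exists_subset_le_card_add_sum_of_card_eq_two
    h.pairwiseDisjoint_left (fun a ha ↦ h.card_eq_left a (h.subset ha))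
    (fun f hf ↦ h.card_eq_left f (hFH hf))
    (fun f hf ↦ h.card_inter_biUnion_le_one (hFH hf) (hFB f hf)) hl
    (by linarith : l ≤ 1) (by positivity : 0 ≤ δ) hy
    (fun v ↦ (hload v).trans (by split_ifs <;> norm_num))
    (fun v hv ↦ (hload v).trans_eq (if_pos hv))
  refine ⟨S, hSA, y', fun f hf ↦ ⟨(hy' f hf).1, (hy' f hf).2.trans ?_⟩, hload', hyS,
    le_trans ?_ hsum⟩
  · linarith [mul_le_of_le_one_right hl.le (by linarith : l ≤ 1)]
  · have hloss : δ / l ≤ l := by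
      rw [div_le_iff₀ hl]
      linarith
    have hA : 0 ≤ (#A : ℝ) * l := by positivity
    have hB : 0 ≤ (#B : ℝ) * (l ^ 2 * (1 - 4 * l)) :=
      mul_nonneg (Nat.cast_nonneg _) (mul_nonneg (sq_nonneg l) (by linarith))
    have hB' : 0 ≤ (#B : ℝ) * l ^ 2 := by positivity
    have hl1 : 0 ≤ 1 - l := by linarith
    calc (#A + #B : ℝ) * (2 / 3 - 6 * l)
        ≤ 2 / 3 * #A + (1 - l) * ((1 - l) * (2 / 3 * (1 - 4 * l) * #B)) := by
          linarith [mul_nonneg (Nat.cast_nonneg (α := ℝ) #B) hl.le]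
      _ ≤ 2 / 3 * #A + (1 - l) * ((1 - l) * ∑ f ∈ F, y f) := by gcongr
      _ ≤ 2 / 3 * #A + (1 - δ / l) * ((1 - l) * ∑ f ∈ F, y f) := by
          have := sum_nonneg fun f hf ↦ (hy f hf).1
          gcongr

theorem exists_isRestrictedFractionalMatching_of_two (h : IsMatchingSplit H A B 2 β l)
    (hl : 0 < l) (hl' : 6 * l ≤ 1) (hβ : 1 ≤ l ^ 3 * β) :
    ∃ y, IsRestrictedFractionalMatching H (6 * l) y ∧
      (#A + #B : ℝ) * (2 / 3 - 6 * l) ≤ ∑ e ∈ H, y e := by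
  obtain ⟨S, hSA, y, hy, hload, hyS, hsum⟩ :=
    h.exists_subset_mul_le_card_add_sum hl (by linarith) hβ rfl
  set F := {f ∈ H | ¬ Disjoint f (B.biUnion id)}
  have hFH : F ⊆ H := filter_subset _ _
  have hF : ∅ ∉ F := fun hmem ↦ by simpa using h.card_eq_left ∅ (hFH hmem)
  obtain ⟨y', hy', hsum'⟩ := exists_isRestrictedFractionalMatching_of_disjoint
    (F := {f ∈ F | Disjoint f (S.biUnion id)}) (by positivity) hl' (hSA.trans h.subset)
    ((filter_subset _ _).trans hFH) (h.pairwiseDisjoint_left.subset (coe_subset.2 hSA))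
    (fun hmem ↦ hF (mem_filter.1 hmem).1) (fun f hf ↦ (mem_filter.1 hf).2)
    (fun f hf ↦ hy f (mem_filter.1 hf).1) fun v ↦ le_trans
      (sum_le_sum_of_subset_of_nonneg (filter_subset_filter _ (filter_subset _ _))
        fun f hf _ ↦ (hy f (mem_filter.1 hf).1).1) (hload v)
  refine ⟨y', hy', hsum.trans_eq ?_⟩
  rw [hsum', sum_filter_of_ne fun f hf hyf ↦ not_not.1 fun hfS ↦ hyf (hyS f hf hfS)]

end IsMatchingSplit

end RankTwo

/-! ### Splitting a maximum matching of an HEDCS -/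

lemma exists_pairwiseDisjoint_card_eq_matchNum [DecidableEq V] (E : Finset (Finset V)) :
    ∃ M ⊆ E, (M : Set (Finset V)).PairwiseDisjoint id ∧ #M = matchNum E := by
  obtain ⟨M, hM, hcard⟩ := exists_mem_eq_sup
    {M ∈ E.powerset | ∀ e ∈ M, ∀ f ∈ M, e ≠ f → e ∩ f = ∅} ⟨∅, by simp⟩ card
  rw [mem_filter, mem_powerset] at hM
  exact ⟨M, hM.1, fun e he f hf hef ↦ disjoint_iff_inter_eq_empty.2 (hM.2 e he f hf hef),
    hcard.symm⟩

lemma exists_isMatchingSplit_card_add_card_eq_matchNum [DecidableEq V] {H E : Finset (Finset V)}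
    {d : ℕ} {β l : ℝ} (hE : ∀ e ∈ E, #e = d) (hHE : H ⊆ E)
    (hle : ∀ e ∈ H, ∑ v ∈ e, (deg H v : ℝ) ≤ β)
    (hge : ∀ e ∈ E, e ∉ H → β * (1 - l) ≤ ∑ v ∈ e, (deg H v : ℝ)) :
    ∃ A B, IsMatchingSplit H A B d β l ∧ #A + #B = matchNum E := by
  obtain ⟨M, hME, hM, hcard⟩ := exists_pairwiseDisjoint_card_eq_matchNum E
  refine ⟨{e ∈ M | e ∈ H}, {e ∈ M | e ∉ H}, ?_, hcard ▸ card_filter_add_card_filter_not _⟩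
  exact {
    card_eq_left := fun e he ↦ hE e (hHE he)
    card_eq_right := fun b hb ↦ hE b (hME (mem_filter.1 hb).1)
    subset := fun a ha ↦ (mem_filter.1 ha).2
    sum_deg_le := hle
    le_sum_deg := fun b hb ↦ hge b (hME (mem_filter.1 hb).1) (mem_filter.1 hb).2
    pairwiseDisjoint := by rwa [filter_union_filter_not_eq]
    disjoint := disjoint_filter_filter_not _ _ _ }

theorem hedcs_restricted_fractional_matching_general [DecidableEq V] {d : ℕ} (hd : 2 ≤ d)
    {E H : Finset (Finset V)} (hE : ∀ e ∈ E, #e = d) (hHE : H ⊆ E) {l β : ℝ} (hl : 0 < l)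
    (hl' : 6 * l ≤ 1) (hβ : 1 ≤ l ^ 3 * β) (hle : ∀ e ∈ H, ∑ v ∈ e, (deg H v : ℝ) ≤ β)
    (hge : ∀ e ∈ E, e ∉ H → β * (1 - l) ≤ ∑ v ∈ e, (deg H v : ℝ)) :
    ∃ y, IsRestrictedFractionalMatching H (6 * l) y ∧
      (matchNum E : ℝ) * (d / ((d : ℝ) ^ 2 - d + 1) - 6 * l / (d - 1)) ≤ ∑ e ∈ H, y e := by
  obtain ⟨A, B, h, hcard⟩ := exists_isMatchingSplit_card_add_card_eq_matchNum hE hHE hle hge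
  rw [← hcard, Nat.cast_add]
  rcases hd.eq_or_lt with rfl | hd
  · convert h.exists_isRestrictedFractionalMatching_of_two hl hl' hβ using 5
    norm_num
  · refine h.exists_isRestrictedFractionalMatching_of_three_le hd hl hl' ?_
    have hβ0 : 0 < β := pos_of_mul_pos_right (zero_lt_one.trans_le hβ) (by positivity)
    have hl2 : (6 * l) ^ 2 ≤ 1 := pow_le_one₀ (by positivity) hl'
    linarith [mul_le_mul_of_nonneg_right hl2 (by positivity : 0 ≤ l * β)]

lemma one_le_cube_mul_of_div_le {d : ℕ} {l β : ℝ} (hd : 2 ≤ d) (hl : 0 < l)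
    (hβ : 8 * (d : ℝ) ^ 2 / ((d : ℝ) - 1) / l ^ 3 ≤ β) : 1 ≤ l ^ 3 * β := by
  have hd' : (2 : ℝ) ≤ d := by exact_mod_cast hd
  rw [div_le_iff₀ (by positivity), div_le_iff₀ (by linarith)] at hβ
  refine le_of_mul_le_mul_right ?_ (by linarith : (0 : ℝ) < d - 1)
  linarith [sq_nonneg ((d : ℝ) - 2)]

end FractionalMatching

/-- Every HEDCS `H` of a `d`-uniform hypergraph with parameters `(β, β(1−λ))`,
where `λ = ε/6` and `β ≥ (8d²/(d−1))·λ⁻³`, contains an `ε`-restricted fractional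
matching of total value at least `μ(G)·(d/(d² − d + 1) − ε/(d−1))`. -/
theorem hedcs_restricted_fractional_matching {V : Type*} [DecidableEq V]
    (d : ℕ) (hd : 2 ≤ d)
    (E : Finset (Finset V)) (hE : ∀ e ∈ E, e.card = d)
    (ε : ℝ) (hε0 : 0 < ε) (hε1 : ε < 1)
    (lam : ℝ) (hlam : lam = ε / 6)
    (β : ℝ) (hβ : 8 * (d : ℝ) ^ 2 / ((d : ℝ) - 1) / lam ^ 3 ≤ β)
    (H : Finset (Finset V)) (hHE : H ⊆ E)
    (hP1 : ∀ e ∈ H, (∑ v ∈ e, (deg H v : ℝ)) ≤ β)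
    (hP2 : ∀ e ∈ E, e ∉ H → β * (1 - lam) ≤ ∑ v ∈ e, (deg H v : ℝ)) :
    ∃ y : Finset V → ℝ,
      (∀ e, e ∉ H → y e = 0) ∧
      (∀ e, 0 ≤ y e ∧ y e ≤ 1) ∧
      (∀ v : V, ∑ e ∈ H.filter (fun e => v ∈ e), y e ≤ 1) ∧
      (∀ e ∈ H, y e = 1 ∨ y e ≤ ε) ∧
      (matchNum E : ℝ) * ((d : ℝ) / ((d : ℝ) ^ 2 - d + 1) - ε / ((d : ℝ) - 1))
        ≤ ∑ e ∈ H, y e := by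
  obtain rfl : ε = 6 * lam := by linarith
  have hlam0 : 0 < lam := by linarith
  obtain ⟨y, hy, hvalue⟩ := hedcs_restricted_fractional_matching_general hd hE hHE hlam0 hε1.le
    (one_le_cube_mul_of_div_le hd hlam0 hβ) hP1 hP2
  exact ⟨y, hy.eq_zero_of_notMem, hy.mem_Icc, hy.load_le_one, hy.eq_one_or_le, hvalue⟩
end

section
/- There is an absolute constant C > 0 with the following property. Let G = (V, E) be a d-uniform hypergraph on n vertices with d ≥ 2, let 0 < λ < 1 and β > 0, and let A and B be any two subgraphs each of which is an HEDCS(G, β, (1−λ)β). Then for every vertex v ∈ V, |d_A(v) − d_B(v)| ≤ C·√n·λ^{1/2}·β. -/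
open Finset

/-- `IsHEDCS E H β β⁻`: `H ⊆ E`, every edge of `H` has degree-sum at most `β`,
and every edge of `E \ H` has degree-sum at least `β⁻`. -/
def IsHEDCS {V : Type*} [DecidableEq V] (E H : Finset (Finset V)) (β βm : ℝ) : Prop :=
  H ⊆ E ∧ (∀ e ∈ H, (∑ v ∈ e, (deg H v : ℝ)) ≤ β) ∧
    (∀ e ∈ E, e ∉ H → βm ≤ ∑ v ∈ e, (deg H v : ℝ))

/-!
Write `δ v = d_A(v) - d_B(v)`. Double counting turns `∑ v, δ v ^ 2` into the total of `∑ v ∈ e, δ v`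
over `e ∈ A \ B` plus the total of `-∑ v ∈ e, δ v` over `e ∈ B \ A`. An edge of `A \ B` has degree
sum at most `β` in `A` and at least `(1 - λ)β` in `B`, so it contributes at most `λβ ≤ #e · λβ`, and
likewise for `B \ A`. Each vertex has degree at most `β`, so the edge sizes of `A`, and of `B`,
add up to at most `nβ`. Hence `δ v ^ 2 ≤ ∑ w, δ w ^ 2 ≤ 2nλβ²`.
-/

section DoubleCounting

variable {V : Type*} [Fintype V] [DecidableEq V]

theorem sum_sum_mem_eq_sum_deg_mul {R : Type*} [NonAssocSemiring R] (H : Finset (Finset V))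
    (f : V → R) : ∑ e ∈ H, ∑ v ∈ e, f v = ∑ v, (deg H v : R) * f v := by
  calc ∑ e ∈ H, ∑ v ∈ e, f v = ∑ v, ∑ e ∈ H with v ∈ e, f v :=
        sum_comm' fun e v ↦ by simp
    _ = ∑ v, (deg H v : R) * f v := by simp only [sum_const, nsmul_eq_mul, deg]

theorem sum_sq_deg_sub_deg {R : Type*} [CommRing R] (A B : Finset (Finset V)) :
    ∑ v, ((deg A v : R) - deg B v) ^ 2 =
      ∑ e ∈ A \ B, ∑ v ∈ e, ((deg A v : R) - deg B v) +
        ∑ e ∈ B \ A, ∑ v ∈ e, ((deg B v : R) - deg A v) := by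
  set δ : V → R := fun v ↦ deg A v - deg B v
  calc ∑ v, δ v ^ 2 = ∑ v, (deg A v : R) * δ v - ∑ v, (deg B v : R) * δ v := by
        simp only [← sum_sub_distrib, ← sub_mul, sq, δ]
    _ = ∑ e ∈ A \ B, ∑ v ∈ e, δ v - ∑ e ∈ B \ A, ∑ v ∈ e, δ v := by
        rw [← sum_sum_mem_eq_sum_deg_mul, ← sum_sum_mem_eq_sum_deg_mul, sum_sdiff_sub_sum_sdiff]
    _ = ∑ e ∈ A \ B, ∑ v ∈ e, δ v + ∑ e ∈ B \ A, ∑ v ∈ e, ((deg B v : R) - deg A v) := by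
        simp only [sub_eq_add_neg, ← sum_neg_distrib, neg_add_rev, neg_neg, δ]

end DoubleCounting

namespace IsHEDCS

variable {V : Type*} [DecidableEq V] {E A B : Finset (Finset V)} {β βm : ℝ}

theorem deg_le (hA : IsHEDCS E A β βm) (hβ : 0 ≤ β) (v : V) : (deg A v : ℝ) ≤ β := by
  by_cases hv : ∃ e ∈ A, v ∈ e
  · obtain ⟨e, heA, hve⟩ := hv
    calc (deg A v : ℝ) ≤ ∑ w ∈ e, (deg A w : ℝ) :=
          single_le_sum (f := fun w ↦ (deg A w : ℝ)) (fun _ _ ↦ Nat.cast_nonneg _) hve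
      _ ≤ β := hA.2.1 e heA
  · have hdeg : deg A v = 0 := by
      simpa [deg, card_eq_zero, filter_eq_empty_iff] using hv
    rwa [hdeg, Nat.cast_zero]

theorem sum_card_le [Fintype V] (hA : IsHEDCS E A β βm) (hβ : 0 ≤ β) :
    ∑ e ∈ A, (#e : ℝ) ≤ Fintype.card V * β := by
  calc ∑ e ∈ A, (#e : ℝ) = ∑ v, (deg A v : ℝ) := by
        simpa using sum_sum_mem_eq_sum_deg_mul A (fun _ ↦ (1 : ℝ))
    _ ≤ #(univ : Finset V) • β := sum_le_card_nsmul _ _ _ fun v _ ↦ hA.deg_le hβ v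
    _ = Fintype.card V * β := by rw [card_univ, nsmul_eq_mul]

theorem sum_deg_sub_deg_le {e : Finset V} {βm' β' : ℝ} (hA : IsHEDCS E A β βm')
    (hB : IsHEDCS E B β' βm) (he : e ∈ A \ B) :
    ∑ v ∈ e, ((deg A v : ℝ) - deg B v) ≤ β - βm := by
  obtain ⟨heA, heB⟩ := mem_sdiff.mp he
  rw [sum_sub_distrib]
  exact sub_le_sub (hA.2.1 e heA) (hB.2.2 e (hA.1 heA) heB)

theorem sum_sdiff_sum_deg_sub_deg_le [Fintype V] {βm' β' : ℝ} (hA : IsHEDCS E A β βm')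
    (hB : IsHEDCS E B β' βm) (hβ : 0 ≤ β) (hβm : βm ≤ β) :
    ∑ e ∈ A \ B, ∑ v ∈ e, ((deg A v : ℝ) - deg B v) ≤ Fintype.card V * β * (β - βm) := by
  have hgap : 0 ≤ β - βm := sub_nonneg.mpr hβm
  -- Weighting the bound by `#e` absorbs a possible empty edge, which contributes nothing.
  have hedge : ∀ e ∈ A \ B, ∑ v ∈ e, ((deg A v : ℝ) - deg B v) ≤ #e * (β - βm) := by
    intro e he
    obtain rfl | hne := e.eq_empty_or_nonempty
    · simp
    · exact (hA.sum_deg_sub_deg_le hB he).trans <|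
        le_mul_of_one_le_left hgap (mod_cast hne.card_pos)
  calc ∑ e ∈ A \ B, ∑ v ∈ e, ((deg A v : ℝ) - deg B v)
      ≤ ∑ e ∈ A \ B, #e * (β - βm) := sum_le_sum hedge
    _ ≤ ∑ e ∈ A, #e * (β - βm) :=
        sum_le_sum_of_subset_of_nonneg sdiff_subset fun _ _ _ ↦ by positivity
    _ = (∑ e ∈ A, (#e : ℝ)) * (β - βm) := (sum_mul ..).symm
    _ ≤ Fintype.card V * β * (β - βm) := by gcongr; exact hA.sum_card_le hβ

theorem sum_sq_deg_sub_deg_le [Fintype V] (hA : IsHEDCS E A β βm) (hB : IsHEDCS E B β βm)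
    (hβ : 0 ≤ β) (hβm : βm ≤ β) :
    ∑ v, ((deg A v : ℝ) - deg B v) ^ 2 ≤ 2 * (Fintype.card V * β * (β - βm)) := by
  rw [sum_sq_deg_sub_deg, two_mul]
  exact add_le_add (hA.sum_sdiff_sum_deg_sub_deg_le hB hβ hβm)
    (hB.sum_sdiff_sum_deg_sub_deg_le hA hβ hβm)

end IsHEDCS

theorem degree_distribution_general {V : Type*} [Fintype V] [DecidableEq V]
    {E A B : Finset (Finset V)} {lam β : ℝ} (hlam : 0 ≤ lam) (hβ : 0 ≤ β)
    (hA : IsHEDCS E A β ((1 - lam) * β)) (hB : IsHEDCS E B β ((1 - lam) * β)) (v : V) :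
    |(deg A v : ℝ) - deg B v| ≤ √2 * √(Fintype.card V) * √lam * β := by
  have hgap : (1 - lam) * β ≤ β := mul_le_of_le_one_left hβ (sub_le_self 1 hlam)
  refine abs_le_of_sq_le_sq ?_ (by positivity)
  calc ((deg A v : ℝ) - deg B v) ^ 2 ≤ ∑ w, ((deg A w : ℝ) - deg B w) ^ 2 :=
        single_le_sum (f := fun w ↦ ((deg A w : ℝ) - deg B w) ^ 2)
          (fun _ _ ↦ sq_nonneg _) (mem_univ v)
    _ ≤ 2 * (Fintype.card V * β * (β - (1 - lam) * β)) := hA.sum_sq_deg_sub_deg_le hB hβ hgap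
    _ = (√2 * √(Fintype.card V) * √lam * β) ^ 2 := by
        rw [mul_pow, mul_pow, mul_pow, Real.sq_sqrt zero_le_two,
          Real.sq_sqrt (Nat.cast_nonneg _), Real.sq_sqrt hlam]
        ring

/-- Degree Distribution Lemma: there is an absolute constant `C > 0` such that
for any two HEDCS `A`, `B` of the same `d`-uniform hypergraph on `n` vertices
with parameters `(β, (1−λ)β)`, every vertex satisfies
`|d_A(v) − d_B(v)| ≤ C·√n·λ^{1/2}·β`. -/
theorem degree_distribution :
    ∃ C : ℝ, 0 < C ∧
      ∀ (V : Type) [Fintype V] [DecidableEq V],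
      ∀ d : ℕ, 2 ≤ d →
      ∀ E : Finset (Finset V), (∀ e ∈ E, e.card = d) →
      ∀ lam β : ℝ, 0 < lam → lam < 1 → 0 < β →
      ∀ A B : Finset (Finset V),
        IsHEDCS E A β ((1 - lam) * β) →
        IsHEDCS E B β ((1 - lam) * β) →
        ∀ v : V, |(deg A v : ℝ) - (deg B v : ℝ)|
          ≤ C * Real.sqrt (Fintype.card V) * Real.sqrt lam * β :=
  ⟨√2, by positivity, fun _ _ _ _ _ _ _ _ _ hlam _ hβ _ _ hA hB v ↦
    degree_distribution_general hlam.le hβ.le hA hB v⟩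
end

section
/- Let G = (V, E) be a d-uniform hypergraph with d ≥ 2 and let E = E₁ ∪ ⋯ ∪ E_k be a partition of the edge set into k ≥ 1 pairwise disjoint parts; write G_i = (V, E_i). Let 0 ≤ λ < 1, β > 0, δ ≥ 0, and for each i let C_i ⊆ E_i be an HEDCS(G_i, β, (1−λ)β). Suppose that for all i, j ∈ {1, …, k} and every vertex v ∈ V, |d_{C_i}(v) − d_{C_j}(v)| ≤ δ. Then C = C₁ ∪ ⋯ ∪ C_k is an HEDCS(G, k(β + dδ), k((1−λ)β − dδ)). -/
open Finset

/-!
Degrees add over disjoint unions, so if all `C i` have nearly the same degrees then `⋃ C i` has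
degrees close to `k` times those of any single `C j`. An edge of `E j` is controlled by the HEDCS
`C j`, and its degree sum in the union is `k` times its degree sum in `C j`
up to an error of `δ` per vertex and part.
-/

section DisjointUnion

variable {V ι : Type*} [DecidableEq V] {s : Finset ι} {C : ι → Finset (Finset V)}

theorem deg_biUnion (hC : (s : Set ι).PairwiseDisjoint C) (v : V) :
    deg (s.biUnion C) v = ∑ i ∈ s, deg (C i) v := by
  unfold deg
  rw [filter_biUnion]
  exact card_biUnion <| hC.mono fun _ ↦ filter_subset _ _

theorem abs_deg_biUnion_sub_card_mul_le (hC : (s : Set ι).PairwiseDisjoint C) {v : V} {x δ : ℝ}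
    (hx : ∀ i ∈ s, |(deg (C i) v : ℝ) - x| ≤ δ) :
    |(deg (s.biUnion C) v : ℝ) - #s * x| ≤ #s * δ := by
  have hsum : (deg (s.biUnion C) v : ℝ) - #s * x = ∑ i ∈ s, ((deg (C i) v : ℝ) - x) := by
    rw [deg_biUnion hC, Nat.cast_sum, sum_sub_distrib, sum_const, nsmul_eq_mul]
  calc |(deg (s.biUnion C) v : ℝ) - #s * x|
      ≤ ∑ i ∈ s, |(deg (C i) v : ℝ) - x| := hsum ▸ abs_sum_le_sum_abs _ _
    _ ≤ #s * δ := by simpa only [nsmul_eq_mul] using sum_le_card_nsmul s _ δ hx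

theorem abs_sum_deg_biUnion_sub_card_mul_sum_le (hC : (s : Set ι).PairwiseDisjoint C)
    {e : Finset V} {x : V → ℝ} {δ : ℝ} (hx : ∀ v ∈ e, ∀ i ∈ s, |(deg (C i) v : ℝ) - x v| ≤ δ) :
    |∑ v ∈ e, (deg (s.biUnion C) v : ℝ) - #s * ∑ v ∈ e, x v| ≤ #s * (#e * δ) :=
  calc |∑ v ∈ e, (deg (s.biUnion C) v : ℝ) - #s * ∑ v ∈ e, x v|
      = |∑ v ∈ e, ((deg (s.biUnion C) v : ℝ) - #s * x v)| := by rw [sum_sub_distrib, mul_sum]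
    _ ≤ ∑ v ∈ e, |(deg (s.biUnion C) v : ℝ) - #s * x v| := abs_sum_le_sum_abs _ _
    _ ≤ #e • (#s * δ) :=
      sum_le_card_nsmul e _ _ fun v hv ↦ abs_deg_biUnion_sub_card_mul_le hC (hx v hv)
    _ = #s * (#e * δ) := by rw [nsmul_eq_mul, mul_left_comm]

theorem hedcs_composition_general {E : ι → Finset (Finset V)} {d : ℕ} {β βm δ : ℝ}
    (hd : ∀ i ∈ s, ∀ e ∈ E i, #e ≤ d) (hδ : 0 ≤ δ)
    (hdisj : (s : Set ι).PairwiseDisjoint C) (hC : ∀ i ∈ s, IsHEDCS (E i) (C i) β βm)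
    (hclose : ∀ i ∈ s, ∀ j ∈ s, ∀ v, |(deg (C i) v : ℝ) - deg (C j) v| ≤ δ) :
    IsHEDCS (s.biUnion E) (s.biUnion C) (#s * (β + d * δ)) (#s * (βm - d * δ)) := by
  have hcompare : ∀ j ∈ s, ∀ e ∈ E j,
      |∑ v ∈ e, (deg (s.biUnion C) v : ℝ) - #s * ∑ v ∈ e, (deg (C j) v : ℝ)| ≤ #s * (d * δ) := by
    intro j hj e he
    have hcard : (#e : ℝ) ≤ d := mod_cast hd j hj e he
    exact (abs_sum_deg_biUnion_sub_card_mul_sum_le hdisj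
      fun v _ i hi ↦ hclose i hi j hj v).trans (by gcongr)
  refine ⟨biUnion_mono fun i hi ↦ (hC i hi).1, fun e he ↦ ?_, fun e he heC ↦ ?_⟩
  · obtain ⟨j, hj, hej⟩ := mem_biUnion.mp he
    obtain ⟨hsub, hupper, -⟩ := hC j hj
    calc ∑ v ∈ e, (deg (s.biUnion C) v : ℝ)
        ≤ #s * ∑ v ∈ e, (deg (C j) v : ℝ) + #s * (d * δ) :=
          sub_le_iff_le_add'.mp (abs_le.mp (hcompare j hj e (hsub hej))).2
      _ = #s * (∑ v ∈ e, (deg (C j) v : ℝ) + d * δ) := (mul_add ..).symm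
      _ ≤ #s * (β + d * δ) := by gcongr; exact hupper e hej
  · obtain ⟨j, hj, hej⟩ := mem_biUnion.mp he
    obtain ⟨-, -, hlower⟩ := hC j hj
    have hejC : e ∉ C j := fun h ↦ heC (mem_biUnion.mpr ⟨j, hj, h⟩)
    calc #s * (βm - d * δ)
        ≤ #s * (∑ v ∈ e, (deg (C j) v : ℝ) - d * δ) := by gcongr; exact hlower e hej hejC
      _ = #s * ∑ v ∈ e, (deg (C j) v : ℝ) - #s * (d * δ) := mul_sub ..
      _ ≤ ∑ v ∈ e, (deg (s.biUnion C) v : ℝ) := by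
          linarith [(abs_le.mp (hcompare j hj e hej)).1]

end DisjointUnion

/-- Composition of HEDCS: if `E = E₁ ∪ ⋯ ∪ E_k` is a partition, each
`Cᵢ` is an `HEDCS(Gᵢ, β, (1−λ)β)`, and all the `Cᵢ` have pointwise degrees
within `δ` of each other, then `C = C₁ ∪ ⋯ ∪ C_k` is an
`HEDCS(G, k(β + dδ), k((1−λ)β − dδ))`. -/
theorem hedcs_composition {V : Type*} [DecidableEq V] (d : ℕ) (hd : 2 ≤ d)
    (k : ℕ) (hk : 1 ≤ k)
    (E : Finset (Finset V)) (hE : ∀ e ∈ E, e.card = d)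
    (Ei : Fin k → Finset (Finset V))
    (hdisj : ∀ i j, i ≠ j → Disjoint (Ei i) (Ei j))
    (hunion : Finset.univ.biUnion Ei = E)
    (lam β δ : ℝ) (hlam0 : 0 ≤ lam) (hlam1 : lam < 1) (hβ : 0 < β) (hδ : 0 ≤ δ)
    (Ci : Fin k → Finset (Finset V))
    (hC : ∀ i, IsHEDCS (Ei i) (Ci i) β ((1 - lam) * β))
    (hclose : ∀ i j, ∀ v : V, |((deg (Ci i) v : ℝ)) - (deg (Ci j) v : ℝ)| ≤ δ) :
    IsHEDCS E (Finset.univ.biUnion Ci)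
      ((k : ℝ) * (β + d * δ)) ((k : ℝ) * ((1 - lam) * β - d * δ)) := by
  subst hunion
  simpa only [card_univ, Fintype.card_fin] using
    hedcs_composition_general (s := univ)
      (fun i hi e he ↦ (hE e (mem_biUnion.mpr ⟨i, hi, he⟩)).le) hδ
      (fun i _ j _ hij ↦ (hdisj i j hij).mono (hC i).1 (hC j).1)
      (fun i _ ↦ hC i) (fun i _ j _ ↦ hclose i j)
end
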